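/- arXiv:1904.00287 — 2 statements merged into one kernel-verified Lean document; each statement's English description precedes it below -/
import Mathlib

section
/- Assume (A1), (A2) and (SMA) for the finite-state model with real-valued observations. Then for every horizon k ≥ 1, every prior probability vector π, and every convex function φ : ℝ → ℝ for which the integrals exist, ∫_{ℝ^k} φ(m_1(y_{1:k}, π)) σ(π, y_{1:k}, 1) dy_{1:k} ≤ ∫_{ℝ^k} φ(m_2(y_{1:k}, π)) σ(π, y_{1:k}, 2) dy_{1:k}; i.e., the conditional mean under sensor 1 is dominated in the convex stochastic order by that under sensor 2 for all k. -/
open Finset MeasureTheory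

/-- `ψ` is single crossing (from below): once nonnegative it stays nonnegative. -/
def SingleCrossing {α : Type*} [Preorder α] (ψ : α → ℝ) : Prop :=
  ∀ ⦃x x' : α⦄, x < x' → (0 ≤ ψ x → 0 ≤ ψ x') ∧ (ψ x' ≤ 0 → ψ x ≤ 0)

/-- Cdf of the observation density: `F(y|x) = ∫_{-∞}^y B x`. -/
noncomputable def obsCdf {X : ℕ} (B : Fin X → ℝ → ℝ) (y : ℝ) (x : Fin X) : ℝ :=
  ∫ t in Set.Iic y, B x t

/-- Normalizer `σ(π, y_{1:k}) = Σ_i π_i Π_t B_i(y_t)`. -/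
def nrm {X k : ℕ} (B : Fin X → ℝ → ℝ) (π : Fin X → ℝ) (ys : Fin k → ℝ) : ℝ :=
  ∑ i, π i * ∏ t, B i (ys t)

/-- Conditional mean `m(y_{1:k}, π)`. -/
noncomputable def cmean {X k : ℕ} (B : Fin X → ℝ → ℝ) (g : Fin X → ℝ)
    (π : Fin X → ℝ) (ys : Fin k → ℝ) : ℝ :=
  (∑ i, g i * (π i * ∏ t, B i (ys t))) / nrm B π ys


theorem aux_lintegral_mono {α : Type*} [LinearOrder α] [MeasurableSpace α]
    (ν μ : Measure α) (h : ∀ S : Set α, MeasurableSet S → IsUpperSet S → ν S ≤ μ S)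
    (f : α → ℝ) (hf : Measurable f) (hm : Monotone f) (h0 : ∀ x, 0 ≤ f x) :
    ∫⁻ x, ENNReal.ofReal (f x) ∂ν ≤ ∫⁻ x, ENNReal.ofReal (f x) ∂μ := by
  rw [lintegral_eq_lintegral_meas_lt ν (Filter.Eventually.of_forall h0) hf.aemeasurable,
    lintegral_eq_lintegral_meas_lt μ (Filter.Eventually.of_forall h0) hf.aemeasurable]
  refine lintegral_mono fun t => h _ (measurableSet_lt measurable_const hf) ?_
  intro a b hab ha
  exact lt_of_lt_of_le ha (hm hab)

theorem aux_pi_dom {α : Type*} [LinearOrder α] [MeasurableSpace α]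
    (ν μ : Measure α) [IsProbabilityMeasure ν] [IsProbabilityMeasure μ]
    (h : ∀ S : Set α, MeasurableSet S → IsUpperSet S → ν S ≤ μ S) (k : ℕ) :
    ∀ U : Set (Fin k → α), MeasurableSet U → IsUpperSet U →
      Measure.pi (fun _ => ν) U ≤ Measure.pi (fun _ => μ) U := by
  induction k with
  | zero =>
    intro U _ _
    rw [Measure.pi_of_empty, Measure.pi_of_empty]
  | succ k ih =>
    intro U hU hup
    have hs : ∀ p : α × (Fin k → α),
        (MeasurableEquiv.piFinSuccAbove (fun _ : Fin (k+1) => α) 0).symm p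
          = (Fin.cons p.1 p.2 : Fin (k+1) → α) := by
      intro p
      simp [MeasurableEquiv.piFinSuccAbove_symm_apply, Fin.insertNthEquiv]
    have key : ∀ ρ : Measure α, IsProbabilityMeasure ρ →
        Measure.pi (fun _ : Fin (k+1) => ρ) U
          = ∫⁻ x, Measure.pi (fun _ : Fin k => ρ) {v | (Fin.cons x v : Fin (k+1) → α) ∈ U} ∂ρ := by
      intro ρ _
      have hp := (measurePreserving_piFinSuccAbove (fun _ : Fin (k+1) => ρ) 0).symm
      rw [← hp.measure_preimage hU.nullMeasurableSet]
      rw [Measure.prod_apply (hp.measurable hU)]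
      refine lintegral_congr fun x => congrArg _ ?_
      ext v
      exact iff_of_eq (congrArg (· ∈ U) (hs (x, v)))
    have hmeas : MeasurableSet {p : α × (Fin k → α) | (Fin.cons p.1 p.2 : Fin (k+1) → α) ∈ U} := by
      have := ((MeasurableEquiv.piFinSuccAbove (fun _ : Fin (k+1) => α) 0).symm.measurable hU)
      convert this using 1
      ext p
      exact iff_of_eq (congrArg (· ∈ U) (hs p)).symm
    rw [key ν inferInstance, key μ inferInstance]
    calc _ ≤ ∫⁻ x, Measure.pi (fun _ : Fin k => μ) {v | (Fin.cons x v : Fin (k+1) → α) ∈ U} ∂ν := by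
          refine lintegral_mono fun x => ih _ (measurable_prodMk_left hmeas) ?_
          intro a b hab ha
          refine hup ?_ ha
          exact Fin.cons_le_cons.2 ⟨le_rfl, hab⟩
      _ ≤ _ := by
          have := aux_lintegral_mono ν μ h
            (fun x => (Measure.pi (fun _ : Fin k => μ)).real {v | (Fin.cons x v : Fin (k+1) → α) ∈ U})
            (measurable_measure_prodMk_left hmeas).ennreal_toReal ?_ (fun x => measureReal_nonneg)
          · simpa [Measure.real] using this
          · intro a b hab
            refine measureReal_mono ?_
            intro v hv
            refine hup ?_ hv
            exact Fin.cons_le_cons.2 ⟨hab, le_rfl⟩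

/-- transport of the dominance through two maps into a common ordered space -/
theorem aux_pi_map {α β : Type*} [MeasurableSpace α] [MeasurableSpace β]
    (ν : Measure α) [IsProbabilityMeasure ν] (f : α → β) (hf : Measurable f) (k : ℕ)
    (U : Set (Fin k → β)) (hU : MeasurableSet U) :
    Measure.pi (fun _ : Fin k => ν.map f) U = Measure.pi (fun _ : Fin k => ν) {v | (fun t => f (v t)) ∈ U} := by
  have : IsProbabilityMeasure (ν.map f) := Measure.isProbabilityMeasure_map hf.aemeasurable
  have hm := measurePreserving_pi (fun _ : Fin k => ν) (fun _ : Fin k => ν.map f)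
    (f := fun _ => f) (fun _ => ⟨hf, rfl⟩)
  rw [← hm.measure_preimage hU.nullMeasurableSet]
  rfl

theorem aux_pi_density (f : ℝ → ℝ) (hf : Integrable f) (h0 : ∀ y, 0 ≤ f y) (k : ℕ)
    (_hp : IsProbabilityMeasure (volume.withDensity fun y => ENNReal.ofReal (f y))) 
    (A : Set (Fin k → ℝ)) (hA : MeasurableSet A) :
    ∫ y in A, ∏ t, f (y t) =
      (Measure.pi (fun _ : Fin k => volume.withDensity fun y => ENNReal.ofReal (f y))).real A := by
  have hi : Integrable (fun y : Fin k → ℝ => ∏ t, f (y t)) :=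
    Integrable.fintype_prod (f := fun _ => f) fun _ => hf
  have hnn : ∀ y : Fin k → ℝ, 0 ≤ ∏ t, f (y t) := fun y => Finset.prod_nonneg fun _ _ => h0 _
  have : Measure.pi (fun _ : Fin k => volume.withDensity fun y => ENNReal.ofReal (f y))
     = volume.withDensity fun y => ENNReal.ofReal (∏ t, f (y t)) := by
    refine Measure.pi_eq fun s hs => ?_
    rw [withDensity_apply _ (MeasurableSet.univ_pi hs),
      ← ofReal_integral_eq_lintegral_ofReal hi.integrableOn (Filter.Eventually.of_forall hnn)]
    rw [volume_pi, Measure.restrict_pi_pi, integral_fintype_prod_eq_prod (fun _ => f),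
      ENNReal.ofReal_prod_of_nonneg (fun _ _ => integral_nonneg h0)]
    refine Finset.prod_congr rfl fun i _ => ?_
    rw [withDensity_apply _ (hs i),
      ← ofReal_integral_eq_lintegral_ofReal hf.integrableOn (Filter.Eventually.of_forall h0)]
  rw [this, Measure.real, withDensity_apply _ hA,
      ← ofReal_integral_eq_lintegral_ofReal hi.integrableOn (Filter.Eventually.of_forall hnn),
      ENNReal.toReal_ofReal (integral_nonneg hnn)]

/-- Two disjointness-type estimate -/
theorem aux_compact (P Q : Measure ℝ) [IsProbabilityMeasure P] [IsProbabilityMeasure Q]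
    (S T : Set ℝ) (hS : MeasurableSet S) (hT : MeasurableSet T)
    (h : ∀ a ∈ S, ∀ b ∈ T, P (Set.Ici a) + Q (Set.Iic b) ≤ 1) : P S + Q T ≤ 1 := by
  rw [hS.measure_eq_iSup_isCompact, hT.measure_eq_iSup_isCompact]
  have key : ∀ K ⊆ S, IsCompact K → ∀ L ⊆ T, IsCompact L → P K + Q L ≤ 1 := by
    intro K hKS hK L hLT hL
    rcases K.eq_empty_or_nonempty with rfl | hKn
    · simpa using prob_le_one
    rcases L.eq_empty_or_nonempty with rfl | hLn
    · simpa using prob_le_one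
    obtain ⟨a, ha, ha'⟩ := hK.exists_isLeast hKn
    obtain ⟨b, hb, hb'⟩ := hL.exists_isGreatest hLn
    exact le_trans (add_le_add (measure_mono ha') (measure_mono hb')) (h a (hKS ha) b (hLT hb))
  have e : ∀ (R : Measure ℝ) (W : Set ℝ) (c : ENNReal), c ≤ 1 → (∀ K ⊆ W, IsCompact K → c + R K ≤ 1) →
     c + (⨆ K, ⨆ (_ : K ⊆ W), ⨆ (_ : IsCompact K), R K) ≤ 1 := by
    intro R W c hc hh
    rw [← ENNReal.le_sub_iff_add_le_left (ne_top_of_le_ne_top ENNReal.one_ne_top hc) hc]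
    refine iSup_le fun K => iSup_le fun h1 => iSup_le fun h2 => ?_
    rw [ENNReal.le_sub_iff_add_le_left (ne_top_of_le_ne_top ENNReal.one_ne_top hc) hc]
    exact hh K h1 h2
  rw [add_comm]
  refine e _ _ _ ?_ ?_
  · rw [← hT.measure_eq_iSup_isCompact]; exact prob_le_one
  · intro K h1 h2
    rw [add_comm]
    refine e _ _ _ prob_le_one ?_
    intro L h3 h4
    exact key _ h1 h2 _ h3 h4

/-- the generalised quantile coupling map -/
noncomputable def auxRho (f1 f2 : ℝ → ℝ) (z : ℝ) : EReal :=
  sSup ((fun a : ℝ => (a : EReal)) '' {a | f1 a ≤ f2 z})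

theorem auxRho_mono (f1 f2 : ℝ → ℝ) (h2 : Monotone f2) : Monotone (auxRho f1 f2) := by
  intro z z' hz
  refine sSup_le_sSup (Set.image_mono ?_)
  intro a ha
  exact le_trans ha (h2 hz)

theorem auxRho_lt (f1 f2 : ℝ → ℝ) (h1 : Monotone f1) (a z : ℝ) (h : (a : EReal) < auxRho f1 f2 z) :
    f1 a ≤ f2 z := by
  obtain ⟨_, ⟨b, hb, rfl⟩, hab⟩ := lt_sSup_iff.1 h
  exact le_trans (h1 (EReal.coe_lt_coe_iff.1 hab).le) hb

theorem auxRho_gt (f1 f2 : ℝ → ℝ) (a z : ℝ) (h : auxRho f1 f2 z < (a : EReal)) :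
    f2 z ≤ f1 a := by
  by_contra! hc
  exact absurd (le_sSup ⟨a, hc.le, rfl⟩ : (a : EReal) ≤ auxRho f1 f2 z) (not_le.2 h)

theorem aux_Ici_add (P Q : Measure ℝ) [IsProbabilityMeasure P] [IsProbabilityMeasure Q] [NullSingletonClass P]
    (a z : ℝ) (h : Q (Set.Iic z) ≤ P (Set.Iic a)) : P (Set.Ici a) + Q (Set.Iic z) ≤ 1 := by
  calc _ ≤ P (Set.Ioi a) + P (Set.Iic a) := by
        refine add_le_add (measure_congr Ioi_ae_eq_Ici).ge h
    _ = 1 := by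
        rw [← Set.compl_Iic, add_comm, prob_add_prob_compl measurableSet_Iic]

theorem aux_of_add_compl {α : Type*} [MeasurableSpace α] (Q : Measure α) [IsProbabilityMeasure Q]
    (S : Set α) (hS : MeasurableSet S) (c : ENNReal) (h : c + Q Sᶜ ≤ 1) : c ≤ Q S := by
  rw [← prob_add_prob_compl (μ := Q) hS] at h
  exact (ENNReal.add_le_add_iff_right (measure_ne_top _ _)).1 h

theorem aux_dom_up (f1 f2 : ℝ → ℝ) (h2 : Monotone f2)
  (P1 P2 : Measure ℝ) [IsProbabilityMeasure P1] [IsProbabilityMeasure P2] [NullSingletonClass P1] [NullSingletonClass P2]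
  (k : ℕ) (U : Set (Fin k → EReal)) (hU : MeasurableSet U) (hup : IsUpperSet U)
    (h : ∀ a z, f2 z ≤ f1 a → P2 (Set.Iic z) ≤ P1 (Set.Iic a)) :
    Measure.pi (fun _ => P1) {v : Fin k → ℝ | (fun t => (v t : EReal)) ∈ U} ≤
    Measure.pi (fun _ => P2) {v : Fin k → ℝ | (fun t => auxRho f1 f2 (v t)) ∈ U} := by
  have hr := (auxRho_mono f1 f2 h2).measurable
  rw [← aux_pi_map P1 _ measurable_coe_real_ereal k U hU, ← aux_pi_map P2 _ hr k U hU]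
  have := Measure.isProbabilityMeasure_map (μ := P1) measurable_coe_real_ereal.aemeasurable
  have := Measure.isProbabilityMeasure_map (μ := P2) hr.aemeasurable
  refine aux_pi_dom _ _ ?_ k U hU hup
  intro S hS hSu
  rw [Measure.map_apply measurable_coe_real_ereal hS, Measure.map_apply hr hS]
  refine aux_of_add_compl P2 _ (hr hS) _ ?_
  refine aux_compact P1 P2 _ _ (measurable_coe_real_ereal hS) (hr hS).compl ?_
  intro a ha z hz
  refine aux_Ici_add _ _ _ _ (h a z (auxRho_gt _ _ _ _ ?_))
  by_contra! hc
  exact hz (hSu hc ha)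

theorem aux_dom_down (f1 f2 : ℝ → ℝ) (h1 : Monotone f1) (h2 : Monotone f2)
  (P1 P2 : Measure ℝ) [IsProbabilityMeasure P1] [IsProbabilityMeasure P2] [NullSingletonClass P1] [NullSingletonClass P2]
  (k : ℕ) (U : Set (Fin k → EReal)) (hU : MeasurableSet U) (hup : IsUpperSet U)
    (h : ∀ a z, f1 a ≤ f2 z → P1 (Set.Iic a) ≤ P2 (Set.Iic z)) :
    Measure.pi (fun _ => P2) {v : Fin k → ℝ | (fun t => auxRho f1 f2 (v t)) ∈ U} ≤
    Measure.pi (fun _ => P1) {v : Fin k → ℝ | (fun t => (v t : EReal)) ∈ U} := by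
  have hr := (auxRho_mono f1 f2 h2).measurable
  rw [← aux_pi_map P1 _ measurable_coe_real_ereal k U hU, ← aux_pi_map P2 _ hr k U hU]
  have := Measure.isProbabilityMeasure_map (μ := P1) measurable_coe_real_ereal.aemeasurable
  have := Measure.isProbabilityMeasure_map (μ := P2) hr.aemeasurable
  refine aux_pi_dom _ _ ?_ k U hU hup
  intro S hS hSu
  rw [Measure.map_apply measurable_coe_real_ereal hS, Measure.map_apply hr hS]
  refine aux_of_add_compl P1 _ (measurable_coe_real_ereal hS) _ ?_
  refine aux_compact P2 P1 _ _ (hr hS) (measurable_coe_real_ereal hS).compl ?_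
  intro z hz a ha
  refine aux_Ici_add _ _ _ _ (h a z (auxRho_lt _ _ h1 _ _ ?_))
  by_contra! hc
  exact ha (hSu hc hz)

/-- signed-score TP2 lemma: likelihood ratio ordered vectors -/
theorem aux_tp2 {X : ℕ} (a l l' : Fin X → ℝ) (hl : ∀ i, 0 ≤ l i) (hl' : ∀ i, 0 ≤ l' i)
    (s : Fin X) (hneg : ∀ i < s, a i ≤ 0) (hpos : ∀ i, s ≤ i → 0 ≤ a i)
    (htp : ∀ j i, j ≤ i → l' j * l i ≤ l j * l' i) (hD : 0 < ∑ i, a i * l i) :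
    0 ≤ ∑ i, a i * l' i := by
  classical
  have split : ∀ m : Fin X → ℝ, ∑ i, a i * m i =
      (∑ i with s ≤ i, a i * m i) - ∑ i with ¬ s ≤ i, (- a i) * m i := by
    intro m
    rw [← Finset.sum_filter_add_sum_filter_not univ (fun i => s ≤ i) (fun i => a i * m i)]
    simp
  rw [split] at hD ⊢
  have pos : ∀ m : Fin X → ℝ, (∀ i, 0 ≤ m i) → 0 ≤ ∑ i with s ≤ i, a i * m i := fun m hm =>
    Finset.sum_nonneg fun i hi => mul_nonneg (hpos i (by simpa using hi)) (hm i)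
  have neg : ∀ m : Fin X → ℝ, (∀ i, 0 ≤ m i) → 0 ≤ ∑ i with ¬ s ≤ i, (- a i) * m i := fun m hm =>
    Finset.sum_nonneg fun i hi => mul_nonneg (by
      have := hneg i (by simpa using hi)
      linarith) (hm i)
  have cross : (∑ i with s ≤ i, a i * l i) * (∑ i with ¬ s ≤ i, (- a i) * l' i) ≤
      (∑ i with s ≤ i, a i * l' i) * (∑ i with ¬ s ≤ i, (- a i) * l i) := by
    rw [Finset.sum_mul_sum, Finset.sum_mul_sum]
    refine Finset.sum_le_sum fun i hi => Finset.sum_le_sum fun j hj => ?_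
    have hi : s ≤ i := by simpa using hi
    have hj : j < s := by simpa using hj
    have h1 := htp j i (hj.le.trans hi)
    have h2 := mul_le_mul_of_nonneg_left h1 (mul_nonneg (hpos i hi) (neg_nonneg.2 (hneg j hj)))
    nlinarith [h2]
  have := pos l' hl'
  have := neg l hl
  have := neg l' hl'
  have := pos l hl
  by_contra hc
  rw [not_le] at hc
  generalize (∑ i with s ≤ i, a i * l i) = p at *
  generalize (∑ i with s ≤ i, a i * l' i) = p' at *
  generalize (∑ i with ¬ s ≤ i, (- a i) * l i) = n at *
  generalize (∑ i with ¬ s ≤ i, (- a i) * l' i) = n' at *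
  nlinarith

theorem aux_prod_tp2 {X k : ℕ} (B : Fin X → ℝ → ℝ) (hnn : ∀ x y, 0 ≤ B x y)
    (hA1 : ∀ (x x' : Fin X) (y y' : ℝ), x ≤ x' → y ≤ y' → B x y' * B x' y ≤ B x y * B x' y')
    (y y' : Fin k → ℝ) (hy : y ≤ y') (j i : Fin X) (hij : j ≤ i) :
    (∏ t, B j (y' t)) * ∏ t, B i (y t) ≤ (∏ t, B j (y t)) * ∏ t, B i (y' t) := by
  rw [← Finset.prod_mul_distrib, ← Finset.prod_mul_distrib]
  exact Finset.prod_le_prod (fun t _ => mul_nonneg (hnn _ _) (hnn _ _))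
    (fun t _ => hA1 _ _ _ _ hij (hy t))

theorem aux_prob (f : ℝ → ℝ) (hi : ∫ y, f y = 1) (h0 : ∀ y, 0 ≤ f y) :
    Integrable f ∧ IsProbabilityMeasure (volume.withDensity fun y => ENNReal.ofReal (f y)) := by
  have hf : Integrable f := by
    by_contra h
    rw [integral_undef h] at hi
    exact zero_ne_one hi
  refine ⟨hf, ⟨?_⟩⟩
  rw [withDensity_apply _ MeasurableSet.univ, Measure.restrict_univ,
    ← ofReal_integral_eq_lintegral_ofReal hf (Filter.Eventually.of_forall h0), hi,
    ENNReal.ofReal_one]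

theorem aux_cdf (f : ℝ → ℝ) (hf : Integrable f) (h0 : ∀ y, 0 ≤ f y) (a : ℝ) :
    (volume.withDensity fun y => ENNReal.ofReal (f y)) (Set.Iic a)
      = ENNReal.ofReal (∫ t in Set.Iic a, f t) := by
  rw [withDensity_apply _ measurableSet_Iic,
    ← ofReal_integral_eq_lintegral_ofReal hf.integrableOn (Filter.Eventually.of_forall h0)]

theorem aux_cdf_mono (f : ℝ → ℝ) (hf : Integrable f) (h0 : ∀ y, 0 ≤ f y) :
    Monotone (fun a => ∫ t in Set.Iic a, f t) := by
  intro a b hab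
  exact setIntegral_mono_set hf.integrableOn (Filter.Eventually.of_forall h0)
    (Filter.Eventually.of_forall (Set.Iic_subset_Iic.2 hab))

theorem aux_hinge (X : ℕ) (B₁ B₂ : Fin X → ℝ → ℝ)
    (hB₁c : ∀ x, Continuous (B₁ x))
    (hB₁nn : ∀ x y, 0 ≤ B₁ x y) (hB₂nn : ∀ x y, 0 ≤ B₂ x y)
    (hB₁int : ∀ x, ∫ y, B₁ x y = 1) (hB₂int : ∀ x, ∫ y, B₂ x y = 1)
    (hA1₁ : ∀ (x x' : Fin X) (y y' : ℝ), x ≤ x' → y ≤ y' →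
      B₁ x y' * B₁ x' y ≤ B₁ x y * B₁ x' y')
    (hA2 : ∀ ybar y : ℝ,
      SingleCrossing (fun x : Fin X => obsCdf B₁ ybar x - obsCdf B₂ y x))
    (k : ℕ) (a : Fin X → ℝ) (s : Fin X) (hneg : ∀ i < s, a i ≤ 0) (hpos : ∀ i, s ≤ i → 0 ≤ a i) :
    ∫ y : Fin k → ℝ, max (∑ i, a i * ∏ t, B₁ i (y t)) 0 ≤
      ∫ y : Fin k → ℝ, max (∑ i, a i * ∏ t, B₂ i (y t)) 0 := by
  have hI1 : ∀ i, Integrable (B₁ i) := fun i => (aux_prob _ (hB₁int i) (hB₁nn i)).1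
  have hI2 : ∀ i, Integrable (B₂ i) := fun i => (aux_prob _ (hB₂int i) (hB₂nn i)).1
  have hP1 := fun i => (aux_prob _ (hB₁int i) (hB₁nn i)).2
  have hP2 := fun i => (aux_prob _ (hB₂int i) (hB₂nn i)).2
  have hJ1 : ∀ i, Integrable (fun y : Fin k → ℝ => ∏ t, B₁ i (y t)) := fun i =>
    Integrable.fintype_prod (f := fun _ => B₁ i) fun _ => hI1 i
  have hJ2 : ∀ i, Integrable (fun y : Fin k → ℝ => ∏ t, B₂ i (y t)) := fun i =>
    Integrable.fintype_prod (f := fun _ => B₂ i) fun _ => hI2 i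
  set D1 : (Fin k → ℝ) → ℝ := fun y => ∑ i, a i * ∏ t, B₁ i (y t) with hD1
  set D2 : (Fin k → ℝ) → ℝ := fun y => ∑ i, a i * ∏ t, B₂ i (y t) with hD2
  have hD1c : Continuous D1 := by
    refine continuous_finsetSum _ fun i _ => continuous_const.mul ?_
    exact continuous_finsetProd _ fun t _ => (hB₁c i).comp (continuous_apply t)
  have hD1i : Integrable D1 := integrable_finsetSum _ fun i _ => (hJ1 i).const_mul _
  have hD2i : Integrable D2 := integrable_finsetSum _ fun i _ => (hJ2 i).const_mul _
  set f1 : ℝ → ℝ := fun y => obsCdf B₁ y s with hf1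
  set f2 : ℝ → ℝ := fun y => obsCdf B₂ y s with hf2
  have hm1 : Monotone f1 := aux_cdf_mono _ (hI1 s) (hB₁nn s)
  have hm2 : Monotone f2 := aux_cdf_mono _ (hI2 s) (hB₂nn s)
  let U : Set (Fin k → EReal) := {e | ∃ y : Fin k → ℝ, 0 < D1 y ∧ ∀ t, (y t : EReal) < e t}
  have hUo : IsOpen U := by
    have : U = ⋃ y ∈ {y | 0 < D1 y}, ⋂ t, {e : Fin k → EReal | (y t : EReal) < e t} := by
      ext e; simp [U]
    rw [this]
    refine isOpen_biUnion fun y _ => isOpen_iInter_of_finite fun t => ?_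
    exact isOpen_lt continuous_const (continuous_apply t)
  have hU : MeasurableSet U := hUo.measurableSet
  have hup : IsUpperSet U := by
    rintro e e' he ⟨y, hy, h⟩
    exact ⟨y, hy, fun t => (h t).trans_le (he t)⟩
  set A1 : Set (Fin k → ℝ) := {v | (fun t => (v t : EReal)) ∈ U} with hA1
  set A2 : Set (Fin k → ℝ) := {v | (fun t => auxRho f1 f2 (v t)) ∈ U} with hA2'
  have hA1m : MeasurableSet A1 :=
    (measurable_pi_lambda _ fun t => measurable_coe_real_ereal.comp (measurable_pi_apply t)) hU
  have hA2m : MeasurableSet A2 :=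
    (measurable_pi_lambda _ fun t =>
      (auxRho_mono f1 f2 hm2).measurable.comp (measurable_pi_apply t)) hU
  have hin : ∀ y ∈ A1, 0 ≤ D1 y := by
    rintro y' ⟨y, hy, h⟩
    refine aux_tp2 a _ _ (fun i => Finset.prod_nonneg fun _ _ => hB₁nn _ _)
      (fun i => Finset.prod_nonneg fun _ _ => hB₁nn _ _) s hneg hpos
      (fun j i hij => aux_prod_tp2 B₁ hB₁nn hA1₁ y y' (fun t => ?_) j i hij) hy
    exact (EReal.coe_lt_coe_iff.1 (h t)).le
  have hout : ∀ y, 0 < D1 y → y ∈ A1 := by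
    intro y hy
    have hc : Continuous (fun r : ℝ => D1 (fun t => y t - r)) := by
      refine hD1c.comp (continuous_pi fun t => by fun_prop)
    have : ∀ᶠ r in nhdsWithin (0:ℝ) (Set.Ioi 0), 0 < D1 (fun t => y t - r) := by
      refine Filter.Eventually.filter_mono nhdsWithin_le_nhds ?_
      refine hc.continuousAt.eventually (lt_mem_nhds ?_)
      simpa using hy
    obtain ⟨r, hr, hr0⟩ := (this.and self_mem_nhdsWithin).exists
    refine ⟨_, hr, fun t => EReal.coe_lt_coe_iff.2 ?_⟩
    have : 0 < r := hr0
    linarith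
  have e1 : ∫ y, max (D1 y) 0 = ∫ y in A1, D1 y := by
    rw [← integral_indicator hA1m]
    refine integral_congr_ae (Filter.Eventually.of_forall fun y => ?_)
    by_cases hy : y ∈ A1
    · simp [hy, hin y hy]
    · have : D1 y ≤ 0 := by
        by_contra! hc
        exact hy (hout y hc)
      simp [hy, this]
  have e2 : ∫ y in A2, D2 y ≤ ∫ y, max (D2 y) 0 := by
    rw [← integral_indicator hA2m]
    refine integral_mono (hD2i.indicator hA2m) hD2i.pos_part fun y => ?_
    by_cases hy : y ∈ A2
    · simp [hy]
    · simp [hy]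
  rw [e1]
  refine le_trans ?_ e2
  rw [integral_finsetSum _ fun i _ => ((hJ1 i).const_mul _).integrableOn,
    integral_finsetSum _ fun i _ => ((hJ2 i).const_mul _).integrableOn]
  refine Finset.sum_le_sum fun i _ => ?_
  rw [integral_const_mul, integral_const_mul,
    aux_pi_density _ (hI1 i) (hB₁nn i) k (hP1 i) A1 hA1m,
    aux_pi_density _ (hI2 i) (hB₂nn i) k (hP2 i) A2 hA2m]
  have := hP1 i
  have := hP2 i
  rcases lt_or_ge i s with his | his
  · refine mul_le_mul_of_nonpos_left ?_ (hneg i his)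
    refine ENNReal.toReal_mono (measure_ne_top _ _) ?_
    refine aux_dom_down f1 f2 hm1 hm2 _ _ k U hU hup fun b z hbz => ?_
    rw [aux_cdf _ (hI1 i) (hB₁nn i), aux_cdf _ (hI2 i) (hB₂nn i)]
    refine ENNReal.ofReal_le_ofReal ?_
    have := (hA2 b z his).2 (sub_nonpos.2 hbz)
    exact sub_nonpos.1 this
  · refine mul_le_mul_of_nonneg_left ?_ (hpos i his)
    refine ENNReal.toReal_mono (measure_ne_top _ _) ?_
    refine aux_dom_up f1 f2 hm2 _ _ k U hU hup fun b z hbz => ?_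
    rw [aux_cdf _ (hI1 i) (hB₁nn i), aux_cdf _ (hI2 i) (hB₂nn i)]
    refine ENNReal.ofReal_le_ofReal ?_
    rcases his.eq_or_lt with rfl | his
    · exact hbz
    have := (hA2 b z his).1 (sub_nonneg.2 hbz)
    exact sub_nonneg.1 this

theorem aux_pl (φ : ℝ → ℝ) (hφ : ConvexOn ℝ Set.univ φ) (a b ε : ℝ) (hε : 0 < ε) :
    ∃ (N : ℕ) (α β : ℝ) (w c : ℕ → ℝ), (∀ j, 0 ≤ w j) ∧ ∀ x, a ≤ x → x ≤ b →
      |φ x - (α + β * x + ∑ j ∈ range N, w j * max (x - c j) 0)| ≤ ε := by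
  have hcont : Continuous φ := by
    rw [← continuousOn_univ]
    exact hφ.continuousOn isOpen_univ
  have huc := (isCompact_Icc (a := a) (b := b + 1)).uniformContinuousOn_of_continuous
    hcont.continuousOn
  rw [Metric.uniformContinuousOn_iff] at huc
  obtain ⟨δ, hδ, huc⟩ := huc ε hε
  obtain ⟨h, hh0, hh1, hhδ⟩ : ∃ h : ℝ, 0 < h ∧ h ≤ 1 ∧ h < δ :=
    ⟨min 1 (δ / 2), by positivity, min_le_left _ _, (min_le_right _ _).trans_lt (by linarith)⟩
  let p : ℕ → ℝ := fun j => a + j * h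
  let s : ℕ → ℝ := fun j => (φ (p (j + 1)) - φ (p j)) / h
  let l : ℕ → ℝ → ℝ := fun j x => φ (p j) + s j * (x - p j)
  have hp : ∀ j, p (j + 1) = p j + h := by intro j; simp only [p]; push_cast; ring
  have hs : ∀ j, s j * h = φ (p (j + 1)) - φ (p j) := fun j => div_mul_cancel₀ _ hh0.ne'
  have hl : ∀ j x, l (j + 1) x - l j x = (s (j + 1) - s j) * (x - p (j + 1)) := by
    intro j x
    simp only [l]
    have := hs j
    rw [hp j] at *
    linear_combination -this
  have hw : ∀ j, 0 ≤ s (j + 1) - s j := by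
    intro j
    have h1 := hφ.2 (Set.mem_univ (p j)) (Set.mem_univ (p (j + 1 + 1)))
      (by norm_num : (0:ℝ) ≤ 1/2) (by norm_num : (0:ℝ) ≤ 1/2) (by norm_num)
    simp only [smul_eq_mul] at h1
    have h2 : 1 / 2 * p j + 1 / 2 * p (j + 1 + 1) = p (j + 1) := by rw [hp (j+1), hp j]; ring
    rw [h2] at h1
    have := hs j
    have := hs (j + 1)
    by_contra! hc
    nlinarith
  refine ⟨⌈(b - a) / h⌉₊, φ (p 0) - s 0 * p 0, s 0, fun j => s (j + 1) - s j,
    fun j => p (j + 1), hw, fun x hax hxb => ?_⟩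
  set i := ⌊(x - a) / h⌋₊ with hi
  have hxa : 0 ≤ (x - a) / h := div_nonneg (by linarith) hh0.le
  have hi1 : p i ≤ x := by
    have := Nat.floor_le hxa
    rw [le_div_iff₀ hh0] at this
    simp only [p]; linarith
  have hi2 : x < p (i + 1) := by
    have := Nat.lt_floor_add_one ((x - a) / h)
    rw [div_lt_iff₀ hh0] at this
    simp only [p]; push_cast; linarith
  have hiN : i ≤ ⌈(b - a) / h⌉₊ := by
    refine (Nat.floor_le_floor ?_).trans (Nat.floor_le_ceil _)
    gcongr
  have hpm : Monotone p := by
    refine monotone_nat_of_le_succ fun j => ?_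
    rw [hp]; linarith
  have tel : ∀ n, ∑ j ∈ range n, (s (j + 1) - s j) * max (x - p (j + 1)) 0
      = l (min n i) x - l 0 x := by
    intro n
    induction n with
    | zero => simp
    | succ n ih =>
      rw [Finset.sum_range_succ, ih]
      rcases lt_or_ge n i with hn | hn
      · have h1 : p (n + 1) ≤ x := (hpm hn).trans hi1
        rw [max_eq_left (by linarith), ← hl, min_eq_left hn.le, min_eq_left hn]
        ring
      · have h1 : p (i + 1) ≤ p (n + 1) := hpm (by omega)
        rw [max_eq_right (by linarith), min_eq_right hn, min_eq_right (by omega)]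
        ring
  have e : φ (p 0) - s 0 * p 0 + s 0 * x +
      ∑ j ∈ range ⌈(b - a) / h⌉₊, (s (j + 1) - s j) * max (x - p (j + 1)) 0 = l i x := by
    rw [tel, min_eq_right hiN]
    simp only [l]; ring
  rw [e]
  -- interpolation weight
  have hpi0 : a ≤ p i := by simp only [p]; nlinarith [(Nat.cast_nonneg i : (0:ℝ) ≤ i)]
  have hpi1 : p (i + 1) ≤ b + 1 := by rw [hp]; linarith
  have d1 : |φ (p i) - φ x| < ε := huc _ ⟨hpi0, by linarith⟩ _ ⟨hax, by linarith⟩ (by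
    rw [Real.dist_eq, abs_lt]; have := hp i; constructor <;> linarith)
  have d2 : |φ (p (i + 1)) - φ x| < ε := huc _ ⟨by linarith, hpi1⟩ _ ⟨hax, by linarith⟩ (by
    rw [Real.dist_eq, abs_lt]; have := hp i; constructor <;> linarith)
  have hr0 : 0 ≤ (x - p i) / h := div_nonneg (by linarith) hh0.le
  have hr1 : (x - p i) / h ≤ 1 := by rw [div_le_one hh0]; have := hp i; linarith
  have hlx : l i x = φ (p i) + (x - p i) / h * (φ (p (i + 1)) - φ (p i)) := by
    simp only [l, s]; ring
  rw [hlx]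
  rw [abs_lt] at d1 d2
  generalize (x - p i) / h = r at *
  rw [abs_le]
  constructor <;> nlinarith

theorem aux_convex {Ω : Type*} [MeasurableSpace Ω] (μ : Measure Ω)
    (m₁ m₂ σ₁ σ₂ : Ω → ℝ) (a b : ℝ)
    (h₁ : ∀ y, 0 ≤ σ₁ y) (h₂ : ∀ y, 0 ≤ σ₂ y)
    (hb₁ : ∀ y, σ₁ y ≠ 0 → a ≤ m₁ y ∧ m₁ y ≤ b) (hb₂ : ∀ y, σ₂ y ≠ 0 → a ≤ m₂ y ∧ m₂ y ≤ b)
    (hi₁ : Integrable σ₁ μ) (hi₂ : Integrable σ₂ μ)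
    (hj₁ : Integrable (fun y => m₁ y * σ₁ y) μ) (hj₂ : Integrable (fun y => m₂ y * σ₂ y) μ)
    (hk₁ : ∀ c, Integrable (fun y => max (m₁ y - c) 0 * σ₁ y) μ)
    (hk₂ : ∀ c, Integrable (fun y => max (m₂ y - c) 0 * σ₂ y) μ)
    (hs₁ : ∫ y, σ₁ y ∂μ = 1) (hs₂ : ∫ y, σ₂ y ∂μ = 1)
    (hm : ∫ y, m₁ y * σ₁ y ∂μ = ∫ y, m₂ y * σ₂ y ∂μ)
    (hc : ∀ c, ∫ y, max (m₁ y - c) 0 * σ₁ y ∂μ ≤ ∫ y, max (m₂ y - c) 0 * σ₂ y ∂μ)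
    (φ : ℝ → ℝ) (hφ : ConvexOn ℝ Set.univ φ)
    (hint₁ : Integrable (fun y => φ (m₁ y) * σ₁ y) μ)
    (hint₂ : Integrable (fun y => φ (m₂ y) * σ₂ y) μ) :
    ∫ y, φ (m₁ y) * σ₁ y ∂μ ≤ ∫ y, φ (m₂ y) * σ₂ y ∂μ := by
  refine le_of_forall_pos_le_add fun ε hε => ?_
  obtain ⟨N, α, β, w, c, hw, hL⟩ := aux_pl φ hφ a b (ε / 2) (by linarith)
  set L : ℝ → ℝ := fun x => α + β * x + ∑ j ∈ range N, w j * max (x - c j) 0 with hLdef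
  have key : ∀ (m σ : Ω → ℝ), Integrable σ μ → Integrable (fun y => m y * σ y) μ →
      (∀ c, Integrable (fun y => max (m y - c) 0 * σ y) μ) → (∫ y, σ y ∂μ = 1) →
      Integrable (fun y => L (m y) * σ y) μ ∧ ∫ y, L (m y) * σ y ∂μ
        = α + β * ∫ y, m y * σ y ∂μ + ∑ j ∈ range N, w j * ∫ y, max (m y - c j) 0 * σ y ∂μ := by
    intro m σ hi hj hk h1
    have e : (fun y => L (m y) * σ y) = fun y => (α * σ y + β * (m y * σ y)) +
        ∑ j ∈ range N, w j * (max (m y - c j) 0 * σ y) := by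
      funext y
      simp only [hLdef, add_mul, Finset.sum_mul, mul_assoc]
    have i1 := hi.const_mul α
    have i2 := hj.const_mul β
    have i12 : Integrable (fun y => α * σ y + β * (m y * σ y)) μ := i1.add i2
    have i3 : ∀ j ∈ range N, Integrable (fun y => w j * (max (m y - c j) 0 * σ y)) μ :=
      fun j _ => (hk (c j)).const_mul _
    rw [e]
    refine ⟨i12.add (integrable_finsetSum _ i3), ?_⟩
    rw [integral_add i12 (integrable_finsetSum _ i3), integral_add i1 i2,
      integral_finsetSum _ i3, integral_const_mul, integral_const_mul, h1, mul_one]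
    simp only [integral_const_mul]
  obtain ⟨k1, k1'⟩ := key m₁ σ₁ hi₁ hj₁ hk₁ hs₁
  obtain ⟨k2, k2'⟩ := key m₂ σ₂ hi₂ hj₂ hk₂ hs₂
  have s1 : ∫ y, φ (m₁ y) * σ₁ y ∂μ ≤ ∫ y, L (m₁ y) * σ₁ y ∂μ + ε / 2 := by
    have : ∫ y, L (m₁ y) * σ₁ y ∂μ + ε / 2 = ∫ y, (L (m₁ y) * σ₁ y + ε / 2 * σ₁ y) ∂μ := by
      rw [integral_add k1 (hi₁.const_mul _), integral_const_mul, hs₁, mul_one]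
    rw [this]
    refine integral_mono hint₁ (k1.add (hi₁.const_mul _)) fun y => ?_
    by_cases h0 : σ₁ y = 0
    · simp [h0]
    · have := (abs_le.1 (hL _ (hb₁ y h0).1 (hb₁ y h0).2)).2
      have h := mul_le_mul_of_nonneg_right this (h₁ y)
      simp only [hLdef]
      linarith
  have s2 : ∫ y, L (m₂ y) * σ₂ y ∂μ ≤ ∫ y, φ (m₂ y) * σ₂ y ∂μ + ε / 2 := by
    have : ∫ y, φ (m₂ y) * σ₂ y ∂μ + ε / 2 = ∫ y, (φ (m₂ y) * σ₂ y + ε / 2 * σ₂ y) ∂μ := by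
      rw [integral_add hint₂ (hi₂.const_mul _), integral_const_mul, hs₂, mul_one]
    rw [this]
    refine integral_mono k2 (hint₂.add (hi₂.const_mul _)) fun y => ?_
    by_cases h0 : σ₂ y = 0
    · simp [h0]
    · have := (abs_le.1 (hL _ (hb₂ y h0).1 (hb₂ y h0).2)).1
      have h := mul_le_mul_of_nonneg_right this (h₂ y)
      simp only [hLdef]
      linarith
  have s3 : ∫ y, L (m₁ y) * σ₁ y ∂μ ≤ ∫ y, L (m₂ y) * σ₂ y ∂μ := by
    rw [k1', k2', hm]
    refine add_le_add le_rfl (Finset.sum_le_sum fun j _ => ?_)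
    exact mul_le_mul_of_nonneg_left (hc _) (hw j)
  linarith

theorem aux_model (X : ℕ) (B : Fin X → ℝ → ℝ) (hnn : ∀ x y, 0 ≤ B x y)
    (hint : ∀ x, ∫ y, B x y = 1) (g : Fin X → ℝ) (a b : ℝ) (hab : ∀ i, a ≤ g i ∧ g i ≤ b)
    (π : Fin X → ℝ) (hπnn : ∀ i, 0 ≤ π i) (hπ : ∑ i, π i = 1) (k : ℕ) :
    (∀ y : Fin k → ℝ, 0 ≤ nrm B π y) ∧
    (∀ y : Fin k → ℝ, nrm B π y ≠ 0 → a ≤ cmean B g π y ∧ cmean B g π y ≤ b) ∧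
    Integrable (fun y : Fin k → ℝ => nrm B π y) ∧
    Integrable (fun y : Fin k → ℝ => cmean B g π y * nrm B π y) ∧
    (∫ y : Fin k → ℝ, nrm B π y = 1) ∧
    (∫ y : Fin k → ℝ, cmean B g π y * nrm B π y = ∑ i, g i * π i) ∧
    (∀ c, (fun y : Fin k → ℝ => max (cmean B g π y - c) 0 * nrm B π y) =
      fun y => max (∑ i, (π i * (g i - c)) * ∏ t, B i (y t)) 0) := by
  have hI : ∀ i, Integrable (B i) := fun i => (aux_prob _ (hint i) (hnn i)).1
  have hJ : ∀ i, Integrable (fun y : Fin k → ℝ => ∏ t, B i (y t)) := fun i =>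
    Integrable.fintype_prod (f := fun _ => B i) fun _ => hI i
  have hJ1 : ∀ i, ∫ y : Fin k → ℝ, ∏ t, B i (y t) = 1 := fun i => by
    rw [integral_fintype_prod_volume_eq_prod (fun _ => B i)]
    simp [hint]
  have ht : ∀ (y : Fin k → ℝ) i, 0 ≤ π i * ∏ t, B i (y t) := fun y i =>
    mul_nonneg (hπnn i) (Finset.prod_nonneg fun _ _ => hnn _ _)
  have h0 : ∀ y : Fin k → ℝ, 0 ≤ nrm B π y := fun y => Finset.sum_nonneg fun i _ => ht y i
  have hM : ∀ y : Fin k → ℝ, cmean B g π y * nrm B π y = ∑ i, g i * (π i * ∏ t, B i (y t)) := by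
    intro y
    by_cases hz : nrm B π y = 0
    · rw [hz, mul_zero]
      have := (Finset.sum_eq_zero_iff_of_nonneg (fun i _ => ht y i)).1 hz
      exact (Finset.sum_eq_zero fun i hi => by rw [this i hi, mul_zero]).symm
    · exact div_mul_cancel₀ _ hz
  refine ⟨h0, ?_, ?_, ?_, ?_, ?_, ?_⟩
  · intro y hy
    have hp : 0 < nrm B π y := lt_of_le_of_ne (h0 y) (Ne.symm hy)
    constructor
    · rw [cmean, le_div_iff₀ hp, nrm, Finset.mul_sum]
      exact Finset.sum_le_sum fun i _ => mul_le_mul_of_nonneg_right (hab i).1 (ht y i)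
    · rw [cmean, div_le_iff₀ hp, nrm, Finset.mul_sum]
      exact Finset.sum_le_sum fun i _ => mul_le_mul_of_nonneg_right (hab i).2 (ht y i)
  · exact integrable_finsetSum _ fun i _ => (hJ i).const_mul _
  · simp only [hM]
    exact integrable_finsetSum _ fun i _ => ((hJ i).const_mul _).const_mul _
  · simp only [nrm]
    rw [integral_finsetSum _ fun i _ => (hJ i).const_mul _]
    simp only [integral_const_mul, hJ1, mul_one, hπ]
  · simp only [hM]
    rw [integral_finsetSum _ fun i _ => ((hJ i).const_mul _).const_mul _]
    simp only [integral_const_mul, hJ1, mul_one]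
  · intro c
    funext y
    have : ∑ i, (π i * (g i - c)) * ∏ t, B i (y t) = (cmean B g π y - c) * nrm B π y := by
      rw [sub_mul, hM, nrm, Finset.mul_sum, ← Finset.sum_sub_distrib]
      exact Finset.sum_congr rfl fun i _ => by ring
    rw [this, max_mul_of_nonneg _ _ (h0 y), zero_mul]

/-- **Global convex dominance for finite-state Bayesian localization with
real-valued observations.**  Under (A1) TP2, (A2) single crossing and (SMA),
for every horizon `k ≥ 1`, every prior `π` and every convex `φ` for which the
integrals exist,
`∫ φ(m₁(y_{1:k},π)) σ(π,y_{1:k},1) dy ≤ ∫ φ(m₂(y_{1:k},π)) σ(π,y_{1:k},2) dy`. -/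
theorem stmt_1 (X : ℕ) (B₁ B₂ : Fin X → ℝ → ℝ)
    (hB₁c : ∀ x, Continuous (B₁ x)) (hB₂c : ∀ x, Continuous (B₂ x))
    (hB₁nn : ∀ x y, 0 ≤ B₁ x y) (hB₂nn : ∀ x y, 0 ≤ B₂ x y)
    (hB₁int : ∀ x, ∫ y, B₁ x y = 1) (hB₂int : ∀ x, ∫ y, B₂ x y = 1)
    (hB₁pos : ∀ y : ℝ, ∃ x, 0 < B₁ x y) (hB₂pos : ∀ y : ℝ, ∃ x, 0 < B₂ x y)
    (g : Fin X → ℝ) (hg : StrictMono g)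
    -- (A1): TP2 observation kernels
    (hA1₁ : ∀ (x x' : Fin X) (y y' : ℝ), x ≤ x' → y ≤ y' →
      B₁ x y' * B₁ x' y ≤ B₁ x y * B₁ x' y')
    (hA1₂ : ∀ (x x' : Fin X) (y y' : ℝ), x ≤ x' → y ≤ y' →
      B₂ x y' * B₂ x' y ≤ B₂ x y * B₂ x' y')
    -- (A2): single crossing condition
    (hA2 : ∀ ybar y : ℝ,
      SingleCrossing (fun x : Fin X => obsCdf B₁ ybar x - obsCdf B₂ y x))
    -- (SMA): product single crossing of complementary cdfs
    (hSMA : ∀ (j : ℕ), 1 ≤ j → ∀ (ys ybars : Fin j → ℝ),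
      SingleCrossing (fun x : Fin X =>
        (∏ t, (1 - obsCdf B₂ (ys t) x)) - ∏ t, (1 - obsCdf B₁ (ybars t) x)))
    -- prior
    (π : Fin X → ℝ) (hπnn : ∀ i, 0 ≤ π i) (hπ : ∑ i, π i = 1)
    (k : ℕ) (hk : 1 ≤ k)
    (φ : ℝ → ℝ) (hφ : ConvexOn ℝ Set.univ φ)
    (hint₁ : Integrable (fun ys : Fin k → ℝ => φ (cmean B₁ g π ys) * nrm B₁ π ys))
    (hint₂ : Integrable (fun ys : Fin k → ℝ => φ (cmean B₂ g π ys) * nrm B₂ π ys)) :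
    (∫ ys : Fin k → ℝ, φ (cmean B₁ g π ys) * nrm B₁ π ys) ≤
      ∫ ys : Fin k → ℝ, φ (cmean B₂ g π ys) * nrm B₂ π ys := by
  obtain ⟨a, b, hab⟩ : ∃ a b : ℝ, ∀ i, a ≤ g i ∧ g i ≤ b := by
    obtain ⟨a, ha⟩ := (Set.finite_range g).bddBelow
    obtain ⟨b, hb⟩ := (Set.finite_range g).bddAbove
    exact ⟨a, b, fun i => ⟨ha ⟨i, rfl⟩, hb ⟨i, rfl⟩⟩⟩
  obtain ⟨p1, q1, i1, j1, s1, m1, c1⟩ := aux_model X B₁ hB₁nn hB₁int g a b hab π hπnn hπ k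
  obtain ⟨p2, q2, i2, j2, s2, m2, c2⟩ := aux_model X B₂ hB₂nn hB₂int g a b hab π hπnn hπ k
  have hk : ∀ (B : Fin X → ℝ → ℝ), (∀ x y, 0 ≤ B x y) → (∀ x, ∫ y, B x y = 1) → ∀ c,
      Integrable (fun y : Fin k → ℝ => max (∑ i, (π i * (g i - c)) * ∏ t, B i (y t)) 0) := by
    intro B hnn hint c
    refine Integrable.pos_part ?_
    exact integrable_finsetSum _ fun i _ => Integrable.const_mul
      (Integrable.fintype_prod (f := fun _ => B i) fun _ => (aux_prob _ (hint i) (hnn i)).1) _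
  refine aux_convex volume (cmean B₁ g π) (cmean B₂ g π) (nrm B₁ π) (nrm B₂ π) a b p1 p2 q1 q2
    i1 i2 j1 j2 (fun c => ?_) (fun c => ?_) s1 s2 (m1.trans m2.symm) (fun c => ?_) φ hφ hint₁ hint₂
  · rw [c1]; exact hk B₁ hB₁nn hB₁int c
  · rw [c2]; exact hk B₂ hB₂nn hB₂int c
  rw [c1, c2]
  by_cases hex : ∃ i, c ≤ g i
  · obtain ⟨s, hs, hmin⟩ := WellFounded.has_min (wellFounded_lt (α := Fin X)) {i | c ≤ g i} hex
    refine aux_hinge X B₁ B₂ hB₁c hB₁nn hB₂nn hB₁int hB₂int hA1₁ hA2 k _ s ?_ ?_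
    · intro i hi
      have : g i < c := by
        by_contra! hc
        exact hmin i hc hi
      exact mul_nonpos_of_nonneg_of_nonpos (hπnn i) (by linarith)
    · intro i hi
      have h1 : g s ≤ g i := hg.monotone hi
      have h2 : c ≤ g s := hs
      exact mul_nonneg (hπnn i) (by linarith)
  · push Not at hex
    have hz : ∀ y : Fin k → ℝ, max (∑ i, (π i * (g i - c)) * ∏ t, B₁ i (y t)) 0 = 0 := by
      intro y
      refine max_eq_right (Finset.sum_nonpos fun i _ => ?_)
      refine mul_nonpos_of_nonpos_of_nonneg ?_ (Finset.prod_nonneg fun _ _ => hB₁nn _ _)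
      exact mul_nonpos_of_nonneg_of_nonpos (hπnn i) (by linarith [hex i])
    simp only [hz, integral_zero]
    exact integral_nonneg fun y => le_max_right _ _
end

section
/- Two power law noises: consider the additive localization model with sensor u ∈ {1,2} noise density p_u(w) = (α_u − 1)(1 + w)^{−α_u} on w ≥ 0, where α_2 > α_1 > 1. Then global convex dominance holds: for every horizon k ≥ 1, every prior density π_0 with finite second moment, and every convex function φ : ℝ → ℝ for which the integrals exist, ∫ φ(m_1(y_{1:k}, π_0)) σ(π_0, y_{1:k}, 1) dy_{1:k} ≤ ∫ φ(m_2(y_{1:k}, π_0)) σ(π_0, y_{1:k}, 2) dy_{1:k}; in particular MSE{m_1(Y^{(1)}_{1:k}, π_0)} ≥ MSE{m_2(Y^{(2)}_{1:k}, π_0)} for all k. -/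
open MeasureTheory Finset

/-- Power-law noise density `p(w) = (α-1)(1+w)^{-α}` on `w ≥ 0` (real power). -/
noncomputable def powerDens (a : ℝ) (w : ℝ) : ℝ :=
  if 0 ≤ w then (a - 1) * (1 + w) ^ (-a) else 0

/-- Normalizer `σ(π₀, y_{1:k}) = ∫ π₀(x) Π_t p(y_t - x) dx` for the additive
model with noise density `p` (supported on `[0,∞)`). -/
noncomputable def nrmA (p : ℝ → ℝ) (π₀ : ℝ → ℝ) {k : ℕ} (ys : Fin k → ℝ) : ℝ :=
  ∫ x, π₀ x * ∏ t, p (ys t - x)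

/-- Conditional mean for the additive model. -/
noncomputable def cmeanA (p : ℝ → ℝ) (π₀ : ℝ → ℝ) {k : ℕ} (ys : Fin k → ℝ) : ℝ :=
  (∫ x, x * (π₀ x * ∏ t, p (ys t - x))) / nrmA p π₀ ys

/-- Mean square error of the conditional mean at horizon `k`. -/
noncomputable def mseA (p : ℝ → ℝ) (π₀ : ℝ → ℝ) (k : ℕ) : ℝ :=
  ∫ ys : Fin k → ℝ, ∫ x, (x - cmeanA p π₀ ys) ^ 2 * (π₀ x * ∏ t, p (ys t - x))

open scoped ENNReal

lemma volterra (K : ℝ → ℝ → ℝ≥0∞) (hK : Measurable (Function.uncurry K))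
    (h E : ℝ → ℝ≥0∞) (hh : Measurable h) (hE : ∀ w, h w + ∫⁻ s, K w s * E s ≤ E w) :
    ∃ n : ℝ → ℝ≥0∞, Measurable n ∧ (∀ w, n w ≤ E w) ∧ ∀ w, n w = h w + ∫⁻ s, K w s * n s := by
  let N : ℕ → ℝ → ℝ≥0∞ := fun j => Nat.rec (fun _ => 0) (fun _ f w => h w + ∫⁻ s, K w s * f s) j
  have N0 : ∀ w, N 0 w = 0 := fun w => rfl
  have NS : ∀ j w, N (j+1) w = h w + ∫⁻ s, K w s * N j s := fun j w => rfl
  have Nm : ∀ j, Measurable (N j) := by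
    intro j
    induction j with
    | zero => exact measurable_const
    | succ j ih =>
      have : N (j+1) = fun w => h w + ∫⁻ s, K w s * N j s := rfl
      rw [this]
      refine hh.add ?_
      have := Measurable.lintegral_prod_right' (ν := (volume : Measure ℝ))
        (f := fun p : ℝ × ℝ => K p.1 p.2 * N j p.2) (hK.mul (ih.comp measurable_snd))
      exact this
  have Kw : ∀ w, Measurable (K w) := fun w => hK.comp measurable_prodMk_left
  have Nmono : Monotone N := by
    apply monotone_nat_of_le_succ
    intro j
    induction j with
    | zero => intro w; rw [N0]; exact zero_le
    | succ j ih =>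
      intro w
      rw [NS (j+1), NS j]
      gcongr with s
      exact ih s
  have NE : ∀ j w, N j w ≤ E w := by
    intro j
    induction j with
    | zero => intro w; rw [N0]; exact zero_le
    | succ j ih =>
      intro w
      rw [NS]
      refine le_trans ?_ (hE w)
      gcongr with s
      exact ih s
  refine ⟨fun w => ⨆ j, N j w, Measurable.iSup Nm, fun w => iSup_le fun j => NE j w, fun w => ?_⟩
  have e1 : ∀ s, K w s * ⨆ j, N j s = ⨆ j, K w s * N j s := fun s => ENNReal.mul_iSup _ _
  simp_rw [e1]
  rw [lintegral_iSup (f := fun j s => K w s * N j s) (fun j => (Kw w).mul (Nm j))]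
  · rw [ENNReal.add_iSup]
    apply le_antisymm
    · refine iSup_le fun j => ?_
      refine le_trans (Nmono (Nat.le_succ j) w) ?_
      exact le_iSup_of_le j (NS j w).le
    · refine iSup_le fun j => ?_
      exact le_iSup_of_le (j+1) (NS j w).ge
  · intro i j hij s
    show K w s * N i s ≤ K w s * N j s
    gcongr
    exact Nmono hij s

lemma subgrad (φ : ℝ → ℝ) (hφ : ConvexOn ℝ Set.univ φ) (x : ℝ) :
    ∃ c, ∀ y, φ x + c * (y - x) ≤ φ y := by
  have hx : x ∈ interior (Set.univ : Set ℝ) := by simp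
  refine ⟨derivWithin φ (Set.Ioi x) x, fun y => ?_⟩
  rcases lt_trichotomy x y with hxy | rfl | hxy
  · have := hφ.rightDeriv_le_slope_of_mem_interior hx (Set.mem_univ y) hxy
    rw [slope_def_field, le_div_iff₀ (by linarith)] at this
    linarith
  · simp
  · have := hφ.slope_le_leftDeriv_of_mem_interior (Set.mem_univ y) hx hxy
    have h2 := this.trans (hφ.leftDeriv_le_rightDeriv_of_mem_interior hx)
    rw [slope_def_field, div_le_iff₀ (by linarith)] at h2
    linarith

/-- FTC in lintegral form -/
lemma ftc_ofReal (F f : ℝ → ℝ) (s w : ℝ) (hsw : s ≤ w)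
    (hF : ∀ u ∈ Set.Icc s w, HasDerivAt F (f u) u) (hf : ContinuousOn f (Set.Icc s w))
    (h0 : ∀ u ∈ Set.Icc s w, 0 ≤ f u) :
    ∫⁻ u in Set.Ioc s w, ENNReal.ofReal (f u) = ENNReal.ofReal (F w - F s) := by
  have hi : IntervalIntegrable f volume s w :=
    ContinuousOn.intervalIntegrable (by rwa [Set.uIcc_of_le hsw])
  have := intervalIntegral.integral_eq_sub_of_hasDerivAt (by rwa [Set.uIcc_of_le hsw]) hi
  rw [← this, intervalIntegral.integral_of_le hsw, ofReal_integral_eq_lintegral_ofReal]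
  · exact hi.1
  · refine (ae_restrict_iff' measurableSet_Ioc).2 (Filter.Eventually.of_forall fun u hu => ?_)
    exact h0 u ⟨hu.1.le, hu.2⟩

noncomputable def kerK (b w s : ℝ) : ℝ := b * s * (1 + w)⁻¹ * (1 + w - s) ^ (-b - 1)

lemma kerK_nonneg {b w s : ℝ} (hb : 0 ≤ b) (hs : 0 < s) (hw : s ≤ w) : 0 ≤ kerK b w s := by
  unfold kerK
  have h1 : 0 < 1 + w := by linarith
  have h2 : 0 ≤ 1 + w - s := by linarith
  positivity

lemma kerK_le {b w s : ℝ} (hb : 0 ≤ b) (hs : 0 < s) (hw : s ≤ w) : kerK b w s ≤ b := by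
  unfold kerK
  have h1 : 0 < 1 + w := by linarith
  have h2 : (1 + w - s) ^ (-b - 1) ≤ 1 :=
    Real.rpow_le_one_of_one_le_of_nonpos (by linarith) (by linarith)
  have h3 : s * (1 + w)⁻¹ ≤ 1 := by
    rw [← div_eq_mul_inv, div_le_one h1]; linarith
  have h4 : 0 ≤ (1 + w - s) ^ (-b - 1) := Real.rpow_nonneg (by linarith) _
  have h5 : 0 ≤ s * (1 + w)⁻¹ := by positivity
  calc b * s * (1 + w)⁻¹ * (1 + w - s) ^ (-b - 1) = b * ((s * (1+w)⁻¹) * (1 + w - s) ^ (-b - 1)) := by ring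
    _ ≤ b * (1 * 1) := by gcongr
    _ = b := by ring

lemma exists_n (a b : ℝ) (ha : 1 < a) (hab : a < b) :
    ∃ n : ℝ → ℝ≥0∞, Measurable n ∧ (∀ w, n w ≤ ENNReal.ofReal ((b - a) * Real.exp (b * w))) ∧
      (∀ w ≤ 0, n w = 0) ∧
      ∀ w, 0 < w → n w = ENNReal.ofReal ((b - a) * (1 + w) ^ (-a - 1)) +
        ∫⁻ s in Set.Ioc 0 w, ENNReal.ofReal (kerK b w s) * n s := by
  classical
  let K : ℝ → ℝ → ℝ≥0∞ := fun w s => if 0 < s ∧ s ≤ w then ENNReal.ofReal (kerK b w s) else 0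
  let h : ℝ → ℝ≥0∞ := fun w => if 0 < w then ENNReal.ofReal ((b - a) * (1 + w) ^ (-a - 1)) else 0
  have hK : Measurable (Function.uncurry K) := by
    have : Function.uncurry K = fun p : ℝ × ℝ =>
      if 0 < p.2 ∧ p.2 ≤ p.1 then ENNReal.ofReal (kerK b p.1 p.2) else 0 := rfl
    rw [this]
    refine Measurable.ite ?_ ?_ measurable_const
    · exact (measurableSet_lt measurable_const measurable_snd).inter
        (measurableSet_le measurable_snd measurable_fst)
    · unfold kerK; fun_prop
  have hh : Measurable h := by
    refine Measurable.ite ?_ ?_ measurable_const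
    · exact measurableSet_lt measurable_const measurable_id
    · fun_prop
  have hKint : ∀ w (f : ℝ → ℝ≥0∞), ∫⁻ s, K w s * f s =
      ∫⁻ s in Set.Ioc 0 w, ENNReal.ofReal (kerK b w s) * f s := by
    intro w f
    rw [← lintegral_indicator measurableSet_Ioc]
    congr 1
    ext s
    by_cases hs : s ∈ Set.Ioc 0 w
    · rw [Set.indicator_of_mem hs]
      simp only [K]; rw [if_pos ⟨hs.1, hs.2⟩]
    · rw [Set.indicator_of_notMem hs]
      simp only [K]; rw [if_neg (fun h => hs ⟨h.1, h.2⟩), zero_mul]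
  obtain ⟨n, nm, nE, ne⟩ := volterra K hK h
    (fun w => ENNReal.ofReal ((b - a) * Real.exp (b * w))) hh (by
      intro w
      rw [hKint]
      by_cases hw : 0 < w
      · have e1 : h w ≤ ENNReal.ofReal (b - a) := by
          simp only [h]; rw [if_pos hw]
          apply ENNReal.ofReal_le_ofReal
          have : (1 + w) ^ (-a - 1) ≤ 1 :=
            Real.rpow_le_one_of_one_le_of_nonpos (by linarith) (by linarith)
          nlinarith
        have e2 : ∫⁻ s in Set.Ioc 0 w, ENNReal.ofReal (kerK b w s) *
            ENNReal.ofReal ((b - a) * Real.exp (b * s)) ≤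
            ∫⁻ s in Set.Ioc 0 w, ENNReal.ofReal (b * ((b - a) * Real.exp (b * s))) := by
          refine setLIntegral_mono' measurableSet_Ioc fun s hs => ?_
          rw [ENNReal.ofReal_mul (p := b) (by linarith)]
          gcongr
          exact kerK_le (by linarith) hs.1 hs.2
        have e3 := ftc_ofReal (fun s => (b - a) * Real.exp (b * s))
          (fun s => b * ((b - a) * Real.exp (b * s))) 0 w hw.le
          (by
            intro u _
            have := ((((hasDerivAt_id u).const_mul b).exp).const_mul (b - a))
            refine HasDerivAt.congr_deriv this ?_
            simp only [id]; ring) (by fun_prop)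
          (by
            intro u _
            have : 0 ≤ b - a := by linarith
            have : 0 ≤ b := by linarith
            positivity)
        rw [e3] at e2
        refine (add_le_add e1 e2).trans ?_
        have : 1 ≤ Real.exp (b * w) := Real.one_le_exp (by nlinarith)
        rw [← ENNReal.ofReal_add (by linarith) (by simp only [mul_zero, Real.exp_zero]; nlinarith)]
        apply ENNReal.ofReal_le_ofReal
        simp
      · have : Set.Ioc 0 w = ∅ := Set.Ioc_eq_empty hw
        rw [this]; simp [h, hw])
  refine ⟨n, nm, nE, ?_, ?_⟩
  · intro w hw
    rw [ne, hKint]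
    have : Set.Ioc 0 w = ∅ := Set.Ioc_eq_empty (not_lt.2 hw)
    rw [this]; simp [h, hw]
  · intro w hw
    rw [ne, hKint]
    simp only [h]; rw [if_pos hw]

/-- the deconvolution identity -/
lemma n_conv (a b : ℝ) (ha : 1 < a) (hab : a < b) (n : ℝ → ℝ≥0∞) (nm : Measurable n)
    (nE : ∀ w, n w ≤ ENNReal.ofReal ((b - a) * Real.exp (b * w)))
    (ne : ∀ w, 0 < w → n w = ENNReal.ofReal ((b - a) * (1 + w) ^ (-a - 1)) +
        ∫⁻ s in Set.Ioc 0 w, ENNReal.ofReal (kerK b w s) * n s) (w : ℝ) (hw : 0 ≤ w) :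
    ∫⁻ s in Set.Ioc 0 w, ENNReal.ofReal ((1 + w - s) ^ (-b)) * n s =
      ENNReal.ofReal ((1 + w) ^ (-a) - (1 + w) ^ (-b)) := by
  -- A
  set A := ∫⁻ s in Set.Ioc 0 w, ENNReal.ofReal ((1 + s) ^ b) * n s with hA
  have hAfin : A ≠ ∞ := by
    have : A ≤ ∫⁻ s in Set.Ioc 0 w, ENNReal.ofReal ((1 + w) ^ b * ((b - a) * Real.exp (b * w))) := by
      refine setLIntegral_mono' measurableSet_Ioc fun s hs => ?_
      rw [ENNReal.ofReal_mul (by positivity)]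
      have h1 := hs.1
      have h2 := hs.2
      gcongr
      · linarith
      · refine (nE s).trans (ENNReal.ofReal_le_ofReal ?_)
        have : 0 ≤ b - a := by linarith
        gcongr
        linarith
    refine ne_top_of_le_ne_top ?_ this
    rw [setLIntegral_const]
    exact ENNReal.mul_ne_top ENNReal.ofReal_ne_top (by simp)
  set H := ∫⁻ u in Set.Ioc 0 w, ENNReal.ofReal ((b - a) * (1 + u) ^ (b - a - 1)) with hH
  have hHe : H = ENNReal.ofReal ((1 + w) ^ (b - a) - 1) := by
    have := ftc_ofReal (fun u => (1 + u) ^ (b - a)) (fun u => (b - a) * (1 + u) ^ (b - a - 1)) 0 w hw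
      (by
        intro u hu
        have h1 : 1 + u ≠ 0 := by linarith [hu.1]
        have := ((hasDerivAt_id u).const_add 1).rpow_const (p := b - a) (Or.inl h1)
        refine HasDerivAt.congr_deriv (f' := 1 * (b - a) * (1 + id u) ^ (b - a - 1)) this ?_
        simp)
      (by
        refine ContinuousOn.mul continuousOn_const ?_
        refine ContinuousOn.rpow_const (by fun_prop) fun u hu => Or.inl ?_
        linarith [hu.1])
      (by
        intro u hu
        have h1 : 0 ≤ 1 + u := by linarith [hu.1]
        have : 0 ≤ b - a := by linarith
        positivity)
    rw [hH, this]; simp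
  have hwp : 0 < 1 + w := by linarith
  -- inner double integral
  set J := ∫⁻ u in Set.Ioc 0 w, ∫⁻ s in Set.Ioc 0 u,
    ENNReal.ofReal ((1 + u) ^ b * kerK b u s) * n s with hJ
  have kmeas : Measurable fun p : ℝ × ℝ => ENNReal.ofReal ((1 + p.1) ^ b * kerK b p.1 p.2) * n p.2 := by
    unfold kerK
    refine Measurable.mul (by fun_prop) (nm.comp measurable_snd)
  have hAJ : A = H + J := by
    rw [hA, hH, hJ, ← lintegral_add_left (by fun_prop)]
    refine setLIntegral_congr_fun measurableSet_Ioc fun u hu => ?_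
    have h1 : 0 < 1 + u := by linarith [hu.1]
    show ENNReal.ofReal ((1 + u) ^ b) * n u = _
    rw [ne u hu.1, mul_add, ← ENNReal.ofReal_mul (by positivity)]
    congr 1
    · congr 1
      rw [show b - a - 1 = b + (-a - 1) by ring, Real.rpow_add h1]; ring
    · rw [← lintegral_const_mul' _ _ ENNReal.ofReal_ne_top]
      congr 1
      ext s
      rw [ENNReal.ofReal_mul (by positivity), mul_assoc]
  set M := ∫⁻ s in Set.Ioc 0 w, ENNReal.ofReal ((1 + w) ^ b * (1 + w - s) ^ (-b)) * n s with hM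
  have hJ2 : J = ∫⁻ s in Set.Ioc 0 w, ∫⁻ u in Set.Ioc s w,
      ENNReal.ofReal ((1 + u) ^ b * kerK b u s) * n s := by
    let G : ℝ → ℝ → ℝ≥0∞ := fun u s => if 0 < s ∧ s ≤ u ∧ u ≤ w then
      ENNReal.ofReal ((1 + u) ^ b * kerK b u s) * n s else 0
    have Gm : Measurable (Function.uncurry G) := by
      have : Function.uncurry G = fun p : ℝ × ℝ =>
        if 0 < p.2 ∧ p.2 ≤ p.1 ∧ p.1 ≤ w then
          ENNReal.ofReal ((1 + p.1) ^ b * kerK b p.1 p.2) * n p.2 else 0 := rfl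
      rw [this]
      refine Measurable.ite ?_ kmeas measurable_const
      exact (measurableSet_lt measurable_const measurable_snd).inter
        ((measurableSet_le measurable_snd measurable_fst).inter
          (measurableSet_le measurable_fst measurable_const))
    have e1 : J = ∫⁻ u, ∫⁻ s, G u s := by
      rw [hJ, ← lintegral_indicator measurableSet_Ioc]
      congr 1; ext u
      by_cases hu : u ∈ Set.Ioc 0 w
      · rw [Set.indicator_of_mem hu, ← lintegral_indicator measurableSet_Ioc]
        congr 1; ext s
        by_cases hs : s ∈ Set.Ioc 0 u
        · rw [Set.indicator_of_mem hs]; simp only [G]; rw [if_pos ⟨hs.1, hs.2, hu.2⟩]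
        · rw [Set.indicator_of_notMem hs]; simp only [G]; rw [if_neg (fun h => hs ⟨h.1, h.2.1⟩)]
      · rw [Set.indicator_of_notMem hu]
        symm
        rw [← lintegral_zero (μ := (volume : Measure ℝ))]
        congr 1; ext s
        simp only [G]; rw [if_neg (fun h => hu ⟨by linarith, h.2.2⟩)]
    rw [e1, lintegral_lintegral_swap Gm.aemeasurable, ← lintegral_indicator measurableSet_Ioc]
    congr 1; ext s
    by_cases hs : s ∈ Set.Ioc 0 w
    · rw [Set.indicator_of_mem hs]
      rw [← setLIntegral_congr (Ioc_ae_eq_Icc (a := s) (b := w)).symm,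
        ← lintegral_indicator measurableSet_Icc]
      congr 1; ext u
      by_cases hu : u ∈ Set.Icc s w
      · rw [Set.indicator_of_mem hu]; simp only [G]; rw [if_pos ⟨hs.1, hu.1, hu.2⟩]
      · rw [Set.indicator_of_notMem hu]; simp only [G]; rw [if_neg (fun h => hu ⟨h.2.1, h.2.2⟩)]
    · rw [Set.indicator_of_notMem hs]
      rw [← lintegral_zero (μ := (volume : Measure ℝ))]
      congr 1; ext u
      simp only [G]; rw [if_neg (fun h => hs ⟨h.1, by linarith⟩)]
  have hMJ : M + J = A := by
    rw [hM, hJ2, hA, ← lintegral_add_left (by fun_prop)]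
    refine setLIntegral_congr_fun measurableSet_Ioc fun s hs => ?_
    have hs1 := hs.1
    have hs2 := hs.2
    show ENNReal.ofReal ((1 + w) ^ b * (1 + w - s) ^ (-b)) * n s + _ = ENNReal.ofReal ((1 + s) ^ b) * n s
    rw [lintegral_mul_const _ (by unfold kerK; fun_prop), ← add_mul]
    congr 1
    have := ftc_ofReal (fun u => -((1 + u) ^ b * (1 + u - s) ^ (-b)))
      (fun u => (1 + u) ^ b * kerK b u s) s w hs2
      (by
        intro u hu
        have hu1 := hu.1
        have h1 : 0 < 1 + u := by linarith
        have h2 : 0 < 1 + u - s := by linarith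
        have d1 := ((hasDerivAt_id u).const_add 1).rpow_const (p := b) (Or.inl h1.ne')
        have d2 := (((hasDerivAt_id u).const_add 1).sub_const s).rpow_const (p := -b) (Or.inl h2.ne')
        have := (d1.mul d2).neg
        refine HasDerivAt.congr_deriv this ?_
        simp only [id]
        unfold kerK
        rw [Real.rpow_sub_one h1.ne', Real.rpow_sub_one h2.ne']
        field_simp
        ring)
      (by
        unfold kerK
        refine ContinuousOn.mul ?_ (ContinuousOn.mul (ContinuousOn.mul continuousOn_const ?_) ?_)
        · refine ContinuousOn.rpow_const (by fun_prop) fun u hu => Or.inl ?_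
          linarith [hu.1]
        · refine ContinuousOn.inv₀ (by fun_prop) fun u hu => ?_
          linarith [hu.1]
        · refine ContinuousOn.rpow_const (by fun_prop) fun u hu => Or.inl ?_
          linarith [hu.1])
      (by
        intro u hu
        have h1 : 0 ≤ 1 + u := by linarith [hu.1]
        exact mul_nonneg (by positivity) (kerK_nonneg (by linarith) hs1 hu.1))
    rw [this]
    have m : (1 + w) ^ b * (1 + w - s) ^ (-b) ≤ (1 + s) ^ b := by
      have h2 : 0 < 1 + w - s := by linarith
      rw [Real.rpow_neg h2.le, ← div_eq_mul_inv, ← Real.div_rpow hwp.le h2.le]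
      apply Real.rpow_le_rpow (by positivity) _ (by linarith)
      rw [div_le_iff₀ h2]
      nlinarith
    have h2 : 0 ≤ 1 + w - s := by linarith
    have e : (1 + s) ^ b * (1 + s - s) ^ (-b) = (1 + s) ^ b := by simp
    rw [e, ← ENNReal.ofReal_add (by positivity) (by linarith)]
    congr 1; ring
  have hJfin : J ≠ ∞ := by
    rw [hAJ] at hAfin
    exact (ENNReal.add_ne_top.1 hAfin).2
  have hMH : M = H := by
    rw [hAJ] at hMJ
    exact (ENNReal.add_left_inj hJfin).1 hMJ
  have c1 : ENNReal.ofReal ((1 + w) ^ (-b)) * M =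
      ∫⁻ s in Set.Ioc 0 w, ENNReal.ofReal ((1 + w - s) ^ (-b)) * n s := by
    rw [hM, ← lintegral_const_mul' _ _ ENNReal.ofReal_ne_top]
    congr 1; ext s
    rw [← mul_assoc, ← ENNReal.ofReal_mul (by positivity), ← mul_assoc, ← Real.rpow_add hwp]
    simp
  rw [← c1, hMH, hHe, ← ENNReal.ofReal_mul (by positivity), mul_sub, ← Real.rpow_add hwp]
  congr 1
  rw [show -b + (b - a) = -a by ring]; ring

lemma pd_meas (a : ℝ) : Measurable (powerDens a) := by
  unfold powerDens
  refine Measurable.ite measurableSet_Ici ?_ measurable_const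
  fun_prop

lemma pd_nonneg {a : ℝ} (ha : 1 < a) (w : ℝ) : 0 ≤ powerDens a w := by
  unfold powerDens
  split_ifs with h
  · have : 0 ≤ 1 + w := by linarith
    exact mul_nonneg (by linarith) (Real.rpow_nonneg this _)
  · exact le_rfl

lemma pd_le {a : ℝ} (ha : 1 < a) (w : ℝ) : powerDens a w ≤ a - 1 := by
  unfold powerDens
  split_ifs with h
  · have : (1 + w) ^ (-a) ≤ 1 :=
      Real.rpow_le_one_of_one_le_of_nonpos (by linarith) (by linarith)
    nlinarith
  · linarith

lemma pd_eq_ind (a : ℝ) : powerDens a =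
    (Set.Ici (0:ℝ)).indicator (fun w => (a - 1) * (1 + w) ^ (-a)) := by
  ext w
  unfold powerDens
  by_cases h : 0 ≤ w
  · rw [if_pos h, Set.indicator_of_mem (by exact h)]
  · rw [if_neg h, Set.indicator_of_notMem (by exact h)]

lemma pd_integrable {a : ℝ} (ha : 1 < a) : Integrable (powerDens a) := by
  rw [pd_eq_ind, integrable_indicator_iff measurableSet_Ici, integrableOn_Ici_iff_integrableOn_Ioi]
  have := integrableOn_add_rpow_Ioi_of_lt (a := -a) (c := 0) (m := 1) (by linarith) (by norm_num)
  refine Integrable.const_mul ?_ _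
  refine Integrable.congr this (Filter.Eventually.of_forall fun x => ?_)
  simp only [add_comm]

lemma pd_integral {a : ℝ} (ha : 1 < a) : ∫ w, powerDens a w = 1 := by
  have e : ∀ w, powerDens a w =
      (Set.Ici (1:ℝ)).indicator (fun x : ℝ => (a - 1) * x ^ (-a)) (1 + w) := by
    intro w
    unfold powerDens
    by_cases h : 0 ≤ w
    · rw [if_pos h, Set.indicator_of_mem (by simpa using h)]
    · rw [if_neg h, Set.indicator_of_notMem (by simpa using h)]
  simp_rw [e]
  rw [integral_add_left_eq_self (fun y => (Set.Ici (1:ℝ)).indicator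
    (fun x : ℝ => (a - 1) * x ^ (-a)) y) 1]
  rw [integral_indicator measurableSet_Ici, integral_Ici_eq_integral_Ioi,
    integral_const_mul, integral_Ioi_rpow_of_lt (by linarith) (by norm_num)]
  have : a - 1 ≠ 0 := by linarith
  have h2 : -a + 1 ≠ 0 := by intro h; apply this; linarith
  simp
  field_simp
  ring

lemma pd_lintegral {a : ℝ} (ha : 1 < a) : ∫⁻ w, ENNReal.ofReal (powerDens a w) = 1 := by
  rw [← ofReal_integral_eq_lintegral_ofReal (pd_integrable ha)
    (Filter.Eventually.of_forall (pd_nonneg ha)), pd_integral ha, ENNReal.ofReal_one]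

lemma exists_nu (a b : ℝ) (ha : 1 < a) (hab : a < b) :
    ∃ ν : Measure ℝ, IsProbabilityMeasure ν ∧
      ∀ w, powerDens a w = ∫ s, powerDens b (w - s) ∂ν := by
  have hb : 1 < b := ha.trans hab
  obtain ⟨n, nm, nE, n0, ne⟩ := exists_n a b ha hab
  have hconv := n_conv a b ha hab n nm nE ne
  let ν : Measure ℝ := ENNReal.ofReal ((a - 1) / (b - 1)) •
    (Measure.dirac 0 + (volume : Measure ℝ).withDensity n)
  have c0 : 0 ≤ (a - 1) / (b - 1) := div_nonneg (by linarith) (by linarith)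
  have fm : ∀ w, Measurable fun s => ENNReal.ofReal (powerDens b (w - s)) := fun w =>
    ENNReal.measurable_ofReal.comp ((pd_meas b).comp (measurable_const.sub measurable_id))
  have key : ∀ w, ∫⁻ s, ENNReal.ofReal (powerDens b (w - s)) ∂ν = ENNReal.ofReal (powerDens a w) := by
    intro w
    rw [lintegral_smul_measure, lintegral_add_measure, lintegral_dirac' _ (fm w),
      lintegral_withDensity_eq_lintegral_mul _ nm (fm w), sub_zero, smul_eq_mul]
    by_cases hw : 0 ≤ w
    · have e : ∫⁻ s, (n * fun s => ENNReal.ofReal (powerDens b (w - s))) s =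
          ENNReal.ofReal (b - 1) *
            ∫⁻ s in Set.Ioc 0 w, ENNReal.ofReal ((1 + w - s) ^ (-b)) * n s := by
        rw [← lintegral_const_mul' _ _ ENNReal.ofReal_ne_top, ← lintegral_indicator measurableSet_Ioc]
        congr 1; ext s
        simp only [Pi.mul_apply]
        by_cases hs : s ∈ Set.Ioc 0 w
        · rw [Set.indicator_of_mem hs]
          unfold powerDens
          rw [if_pos (by linarith [hs.2]), ENNReal.ofReal_mul (by linarith),
            show 1 + (w - s) = 1 + w - s by ring]
          ring
        · rw [Set.indicator_of_notMem hs]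
          by_cases h0 : s ≤ 0
          · rw [n0 s h0, zero_mul]
          · have : ¬ (0 ≤ w - s) := fun h => hs ⟨not_le.1 h0, by linarith⟩
            unfold powerDens
            rw [if_neg this]; simp
      have hwp : 0 ≤ 1 + w := by linarith
      have hle : (1 + w) ^ (-b) ≤ (1 + w) ^ (-a) :=
        Real.rpow_le_rpow_of_exponent_le (by linarith) (by linarith)
      rw [e, hconv w hw, ← ENNReal.ofReal_mul (by linarith),
        ← ENNReal.ofReal_add (pd_nonneg hb w) (mul_nonneg (by linarith) (by linarith)),
        ← ENNReal.ofReal_mul c0]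
      congr 1
      unfold powerDens
      rw [if_pos hw, if_pos hw]
      have : b - 1 ≠ 0 := by linarith
      field_simp
      ring
    · have e : ∀ s, (n * fun s => ENNReal.ofReal (powerDens b (w - s))) s = 0 := by
        intro s
        simp only [Pi.mul_apply]
        by_cases h0 : s ≤ 0
        · rw [n0 s h0, zero_mul]
        · have : ¬ (0 ≤ w - s) := fun h => h0 (by linarith)
          unfold powerDens
          rw [if_neg this]; simp
      simp_rw [e]
      unfold powerDens
      rw [if_neg hw, if_neg hw]; simp
  have hprob : IsProbabilityMeasure ν := by
    constructor
    have h1 := pd_lintegral ha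
    simp_rw [← key] at h1
    have hm : Measurable (Function.uncurry fun w s => ENNReal.ofReal (powerDens b (w - s))) :=
      ENNReal.measurable_ofReal.comp ((pd_meas b).comp (measurable_fst.sub measurable_snd))
    rw [lintegral_lintegral_swap hm.aemeasurable] at h1
    have : ∀ s, ∫⁻ w, ENNReal.ofReal (powerDens b (w - s)) = 1 := by
      intro s
      rw [lintegral_sub_right_eq_self (fun w => ENNReal.ofReal (powerDens b w)) s, pd_lintegral hb]
    simp_rw [this] at h1
    simpa using h1
  refine ⟨ν, hprob, fun w => ?_⟩
  rw [integral_eq_lintegral_of_nonneg_ae (f := fun s => powerDens b (w - s)) (Filter.Eventually.of_forall fun s => pd_nonneg hb _)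
    ((pd_meas b).comp (measurable_const.sub measurable_id)).aestronglyMeasurable, key,
    ENNReal.toReal_ofReal (pd_nonneg ha w)]

section main
variable {a : ℝ} {π₀ : ℝ → ℝ} {k : ℕ}

lemma q_nonneg (ha : 1 < a) (ys : Fin k → ℝ) (x : ℝ) : 0 ≤ ∏ t, powerDens a (ys t - x) :=
  Finset.prod_nonneg fun t _ => pd_nonneg ha _

lemma q_le (ha : 1 < a) (ys : Fin k → ℝ) (x : ℝ) : ∏ t, powerDens a (ys t - x) ≤ (a - 1) ^ k := by
  refine (Finset.prod_le_prod (fun t _ => pd_nonneg ha _) (fun _ _ => pd_le ha _)).trans ?_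
  simp

lemma q_meas (a : ℝ) (k : ℕ) :
    Measurable fun p : (Fin k → ℝ) × ℝ => ∏ t, powerDens a (p.1 t - p.2) := by
  refine Finset.measurable_prod _ fun t _ => (pd_meas a).comp ?_
  fun_prop

lemma q_bound (ha : 1 < a) (ys : Fin k → ℝ) (x : ℝ) :
    ‖∏ t, powerDens a (ys t - x)‖ ≤ (a - 1) ^ k := by
  rw [Real.norm_of_nonneg (q_nonneg ha ys x)]; exact q_le ha ys x

lemma mul_q_integrable (ha : 1 < a) (f : ℝ → ℝ) (hf : Integrable f) (ys : Fin k → ℝ) :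
    Integrable fun x => f x * ∏ t, powerDens a (ys t - x) := by
  refine hf.mul_bdd (c := (a - 1) ^ k) ?_ (Filter.Eventually.of_forall fun x => q_bound ha ys x)
  exact ((q_meas a k).comp measurable_prodMk_left).aestronglyMeasurable

lemma S_eq (ha : 1 < a) (hπnn : ∀ x, 0 ≤ π₀ x) (hi : Integrable π₀) (ys : Fin k → ℝ) :
    cmeanA (powerDens a) π₀ ys * nrmA (powerDens a) π₀ ys =
      ∫ x, x * (π₀ x * ∏ t, powerDens a (ys t - x)) := by
  unfold cmeanA
  by_cases h : nrmA (powerDens a) π₀ ys = 0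
  · rw [h, mul_zero]
    unfold nrmA at h
    rw [integral_eq_zero_iff_of_nonneg (fun x => mul_nonneg (hπnn x) (q_nonneg ha ys x))
      (mul_q_integrable ha π₀ hi ys)] at h
    symm
    apply integral_eq_zero_of_ae
    filter_upwards [h] with x hx
    rw [hx]; simp
  · rw [div_mul_cancel₀ _ h]

lemma nrm_nonneg (ha : 1 < a) (hπnn : ∀ x, 0 ≤ π₀ x) (ys : Fin k → ℝ) :
    0 ≤ nrmA (powerDens a) π₀ ys :=
  integral_nonneg fun x => mul_nonneg (hπnn x) (q_nonneg ha ys x)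

/-- garbling identity -/
lemma garble {b : ℝ} (hb : 1 < b) (ν : Measure ℝ) [IsProbabilityMeasure ν]
    (hν : ∀ w, powerDens a w = ∫ s, powerDens b (w - s) ∂ν)
    (f : ℝ → ℝ) (hf : Integrable f) (ys : Fin k → ℝ) :
    Integrable (fun s : Fin k → ℝ => ∫ x, f x * ∏ t, powerDens b ((ys - s) t - x))
      (Measure.pi fun _ => ν) ∧
    ∫ x, f x * ∏ t, powerDens a (ys t - x) =
      ∫ s : Fin k → ℝ, (∫ x, f x * ∏ t, powerDens b ((ys - s) t - x)) ∂(Measure.pi fun _ => ν) := by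
  have hint : Integrable (Function.uncurry fun (x : ℝ) (s : Fin k → ℝ) =>
      f x * ∏ t, powerDens b ((ys - s) t - x)) (volume.prod (Measure.pi fun _ => ν)) := by
    have h1 : Integrable (fun p : ℝ × (Fin k → ℝ) => f p.1)
        (volume.prod (Measure.pi fun _ => ν)) := hf.comp_fst _
    refine h1.mul_bdd (c := (b - 1) ^ k) ?_
      (Filter.Eventually.of_forall fun p => q_bound hb (ys - p.2) p.1)
    have : Measurable fun p : ℝ × (Fin k → ℝ) => (ys - p.2, p.1) := by fun_prop
    exact ((q_meas b k).comp this).aestronglyMeasurable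
  refine ⟨hint.integral_prod_right, ?_⟩
  rw [← integral_integral_swap hint]
  congr 1; ext x
  rw [integral_const_mul]
  congr 1
  have := integral_fintype_prod_eq_prod (𝕜 := ℝ) (fun (t : Fin k) (s : ℝ) => powerDens b (ys t - x - s))
    (μ := fun _ => ν)
  have e : ∀ s : Fin k → ℝ, ∏ t, powerDens b ((ys - s) t - x) =
      ∏ t, powerDens b (ys t - x - s t) := by
    intro s
    refine Finset.prod_congr rfl fun t _ => ?_
    rw [Pi.sub_apply]; congr 1; ring
  simp_rw [e]
  rw [this]
  exact Finset.prod_congr rfl fun t _ => hν _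

lemma part1 (α₁ α₂ : ℝ) (h1 : 1 < α₁) (h12 : α₁ < α₂) (hπnn : ∀ x, 0 ≤ π₀ x)
    (hi : Integrable π₀) (hi1 : Integrable fun x => x * π₀ x)
    (φ : ℝ → ℝ) (hφ : ConvexOn ℝ Set.univ φ)
    (hI1 : Integrable (fun ys : Fin k → ℝ =>
        φ (cmeanA (powerDens α₁) π₀ ys) * nrmA (powerDens α₁) π₀ ys))
    (hI2 : Integrable (fun ys : Fin k → ℝ =>
        φ (cmeanA (powerDens α₂) π₀ ys) * nrmA (powerDens α₂) π₀ ys)) :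
      (∫ ys : Fin k → ℝ, φ (cmeanA (powerDens α₁) π₀ ys) * nrmA (powerDens α₁) π₀ ys) ≤
        ∫ ys : Fin k → ℝ, φ (cmeanA (powerDens α₂) π₀ ys) * nrmA (powerDens α₂) π₀ ys := by
  have h2 : 1 < α₂ := h1.trans h12
  obtain ⟨ν, hν, hc⟩ := exists_nu α₁ α₂ h1 h12
  let P : Measure (Fin k → ℝ) := Measure.pi fun _ => ν
  let G : (Fin k → ℝ) → ℝ := fun ys =>
    φ (cmeanA (powerDens α₂) π₀ ys) * nrmA (powerDens α₂) π₀ ys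
  have hG : Integrable G := hI2
  have hone : Integrable (fun _ : Fin k → ℝ => (1:ℝ)) P := integrable_const _
  have hcv := hone.convolution_integrand (ContinuousLinearMap.mul ℝ ℝ) hG
  simp only [ContinuousLinearMap.mul_apply', one_mul] at hcv
  have htot : ∫ y, ∫ s, G (y - s) ∂P = ∫ y, G y := by
    rw [integral_integral_swap hcv]
    simp_rw [integral_sub_right_eq_self]
    simp
  show _ ≤ ∫ y, G y
  rw [← htot]
  refine integral_mono_ae hI1 hcv.integral_prod_left ?_
  filter_upwards [hcv.prod_right_ae] with y hy
  obtain ⟨c, hcc⟩ := subgrad φ hφ (cmeanA (powerDens α₁) π₀ y)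
  set m := cmeanA (powerDens α₁) π₀ y with hm
  obtain ⟨g1, g2⟩ := garble h2 ν hc π₀ hi y
  obtain ⟨g3, g4⟩ := garble h2 ν hc _ hi1 y
  have s1 : ∀ ys : Fin k → ℝ, ∫ x, x * π₀ x * ∏ t, powerDens α₂ (ys t - x) =
      cmeanA (powerDens α₂) π₀ ys * nrmA (powerDens α₂) π₀ ys := by
    intro ys; rw [S_eq h2 hπnn hi]; simp_rw [mul_assoc]
  have s2 : ∫ x, x * π₀ x * ∏ t, powerDens α₁ (y t - x) = m * nrmA (powerDens α₁) π₀ y := by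
    rw [S_eq h1 hπnn hi]; simp_rw [mul_assoc]
  simp_rw [s1] at g3 g4
  rw [s2] at g4
  change Integrable (fun s => nrmA (powerDens α₂) π₀ (y - s)) P at g1
  change nrmA (powerDens α₁) π₀ y = ∫ s, nrmA (powerDens α₂) π₀ (y - s) ∂P at g2
  have : ∫ s, ((φ m - c * m) * nrmA (powerDens α₂) π₀ (y - s) +
      c * (cmeanA (powerDens α₂) π₀ (y - s) * nrmA (powerDens α₂) π₀ (y - s))) ∂P ≤
      ∫ s, G (y - s) ∂P := by
    refine integral_mono ((g1.const_mul _).add (g3.const_mul _)) hy fun s => ?_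
    have q1 := hcc (cmeanA (powerDens α₂) π₀ (y - s))
    have q2 := nrm_nonneg h2 hπnn (y - s)
    have q3 := mul_le_mul_of_nonneg_right q1 q2
    simp only [G]
    refine le_trans (le_of_eq ?_) q3
    ring
  refine le_trans (le_of_eq ?_) this
  rw [integral_add (g1.const_mul _) (g3.const_mul _), integral_const_mul, integral_const_mul,
    ← g2, ← g4]
  ring

lemma x2_prod (ha : 1 < a) (f : ℝ → ℝ) (hf : Integrable f) :
    Integrable (fun ys : Fin k → ℝ => ∫ x, f x * ∏ t, powerDens a (ys t - x)) ∧
    ∫ ys : Fin k → ℝ, ∫ x, f x * ∏ t, powerDens a (ys t - x) = ∫ x, f x := by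
  have hone : ∀ x, ∫ ys : Fin k → ℝ, ∏ t, powerDens a (ys t - x) = 1 := by
    intro x
    have := integral_fintype_prod_volume_eq_prod (𝕜 := ℝ)
      (fun (t : Fin k) (s : ℝ) => powerDens a (s - x))
    rw [this]
    refine Finset.prod_eq_one fun t _ => ?_
    rw [integral_sub_right_eq_self (powerDens a) x, pd_integral ha]
  have hqi : ∀ x, Integrable fun ys : Fin k → ℝ => ∏ t, powerDens a (ys t - x) := by
    intro x
    by_contra h
    have := hone x
    rw [integral_undef h] at this
    exact zero_ne_one this
  have hint : Integrable (Function.uncurry fun (ys : Fin k → ℝ) (x : ℝ) =>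
      f x * ∏ t, powerDens a (ys t - x)) (volume.prod volume) := by
    have hms : AEStronglyMeasurable (Function.uncurry fun (ys : Fin k → ℝ) (x : ℝ) =>
      f x * ∏ t, powerDens a (ys t - x)) (volume.prod volume) :=
      (hf.aestronglyMeasurable.comp_snd).mul (q_meas a k).aestronglyMeasurable
    rw [integrable_prod_iff' hms]
    refine ⟨Filter.Eventually.of_forall fun x => (hqi x).const_mul (f x), ?_⟩
    refine hf.norm.congr (Filter.Eventually.of_forall fun x => ?_)
    simp only [Function.uncurry, norm_mul]
    rw [integral_const_mul]
    have : ∀ ys : Fin k → ℝ, ‖∏ t, powerDens a (ys t - x)‖ = ∏ t, powerDens a (ys t - x) :=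
      fun ys => Real.norm_of_nonneg (q_nonneg ha ys x)
    simp_rw [this]
    rw [hone, mul_one]
  refine ⟨hint.integral_prod_left, ?_⟩
  rw [integral_integral_swap hint]
  congr 1; ext x
  rw [integral_const_mul, hone, mul_one]

lemma mse_eq (ha : 1 < a) (hπnn : ∀ x, 0 ≤ π₀ x)
    (hi : Integrable π₀) (hi1 : Integrable fun x => x * π₀ x)
    (hi2 : Integrable fun x => x ^ 2 * π₀ x)
    (hI : Integrable (fun ys : Fin k → ℝ =>
        ∫ x, (x - cmeanA (powerDens a) π₀ ys) ^ 2 * (π₀ x * ∏ t, powerDens a (ys t - x)))) :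
    Integrable (fun ys : Fin k → ℝ =>
      (cmeanA (powerDens a) π₀ ys) ^ 2 * nrmA (powerDens a) π₀ ys) ∧
    mseA (powerDens a) π₀ k = (∫ x, x ^ 2 * π₀ x) -
      ∫ ys : Fin k → ℝ, (cmeanA (powerDens a) π₀ ys) ^ 2 * nrmA (powerDens a) π₀ ys := by
  obtain ⟨j1, j2⟩ := x2_prod (k := k) ha _ hi2
  have e : ∀ ys : Fin k → ℝ,
      ∫ x, (x - cmeanA (powerDens a) π₀ ys) ^ 2 * (π₀ x * ∏ t, powerDens a (ys t - x)) =
      (∫ x, x ^ 2 * π₀ x * ∏ t, powerDens a (ys t - x)) -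
        (cmeanA (powerDens a) π₀ ys) ^ 2 * nrmA (powerDens a) π₀ ys := by
    intro ys
    have s := S_eq ha hπnn hi ys
    set m := cmeanA (powerDens a) π₀ ys
    have i0 := mul_q_integrable ha π₀ hi ys
    have i1 := mul_q_integrable ha _ hi1 ys
    have i2 := mul_q_integrable ha _ hi2 ys
    have : ∀ x, (x - m) ^ 2 * (π₀ x * ∏ t, powerDens a (ys t - x)) =
        x ^ 2 * π₀ x * ∏ t, powerDens a (ys t - x) -
          (2 * m) * (x * π₀ x * ∏ t, powerDens a (ys t - x)) +
          m ^ 2 * (π₀ x * ∏ t, powerDens a (ys t - x)) := by intro x; ring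
    simp_rw [this]
    have i3 : Integrable fun x => x ^ 2 * π₀ x * ∏ t, powerDens a (ys t - x) -
          (2 * m) * (x * π₀ x * ∏ t, powerDens a (ys t - x)) := i2.sub (i1.const_mul _)
    rw [integral_add i3 (i0.const_mul _),
      integral_sub i2 (i1.const_mul _), integral_const_mul, integral_const_mul]
    have s' : ∫ x, x * π₀ x * ∏ t, powerDens a (ys t - x) = m * nrmA (powerDens a) π₀ ys := by
      rw [s]; simp_rw [mul_assoc]
    rw [s']
    unfold nrmA
    ring
  have hm : Integrable (fun ys : Fin k → ℝ =>
      (cmeanA (powerDens a) π₀ ys) ^ 2 * nrmA (powerDens a) π₀ ys) := by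
    refine (j1.sub hI).congr (Filter.Eventually.of_forall fun ys => ?_)
    simp only [Pi.sub_apply]
    rw [e]; ring
  refine ⟨hm, ?_⟩
  unfold mseA
  simp_rw [e]
  rw [integral_sub j1 hm, j2]

end main

/-- **Two power-law additive noises.**  For sensor `u` noise
`p_u(w) = (α_u-1)(1+w)^{-α_u}` with `α₂ > α₁ > 1`, global convex dominance
holds: for every `k ≥ 1`, prior density `π₀` with finite second moment, and
convex `φ` for which the integrals exist, `∫ φ(m₁) σ₁ ≤ ∫ φ(m₂) σ₂`; in
particular `MSE(m₂) ≤ MSE(m₁)`. -/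
theorem stmt_11 (α₁ α₂ : ℝ) (h1 : 1 < α₁) (h12 : α₁ < α₂)
    (π₀ : ℝ → ℝ) (hπm : Measurable π₀) (hπnn : ∀ x, 0 ≤ π₀ x)
    (hπ : ∫ x, π₀ x = 1) (hπ2 : Integrable (fun x => x ^ 2 * π₀ x))
    (k : ℕ) (hk : 1 ≤ k) :
    (∀ φ : ℝ → ℝ, ConvexOn ℝ Set.univ φ →
      Integrable (fun ys : Fin k → ℝ =>
        φ (cmeanA (powerDens α₁) π₀ ys) * nrmA (powerDens α₁) π₀ ys) →
      Integrable (fun ys : Fin k → ℝ =>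
        φ (cmeanA (powerDens α₂) π₀ ys) * nrmA (powerDens α₂) π₀ ys) →
      (∫ ys : Fin k → ℝ, φ (cmeanA (powerDens α₁) π₀ ys) * nrmA (powerDens α₁) π₀ ys) ≤
        ∫ ys : Fin k → ℝ, φ (cmeanA (powerDens α₂) π₀ ys) * nrmA (powerDens α₂) π₀ ys) ∧
    ((∀ ys : Fin k → ℝ, Integrable (fun x =>
        (x - cmeanA (powerDens α₁) π₀ ys) ^ 2 * (π₀ x * ∏ t, powerDens α₁ (ys t - x)))) →
      (∀ ys : Fin k → ℝ, Integrable (fun x =>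
        (x - cmeanA (powerDens α₂) π₀ ys) ^ 2 * (π₀ x * ∏ t, powerDens α₂ (ys t - x)))) →
      Integrable (fun ys : Fin k → ℝ =>
        ∫ x, (x - cmeanA (powerDens α₁) π₀ ys) ^ 2 * (π₀ x * ∏ t, powerDens α₁ (ys t - x))) →
      Integrable (fun ys : Fin k → ℝ =>
        ∫ x, (x - cmeanA (powerDens α₂) π₀ ys) ^ 2 * (π₀ x * ∏ t, powerDens α₂ (ys t - x))) →
      mseA (powerDens α₂) π₀ k ≤ mseA (powerDens α₁) π₀ k) := by
  have hi : Integrable π₀ := by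
    by_contra h
    rw [integral_undef h] at hπ
    exact zero_ne_one hπ
  have hi1 : Integrable fun x => x * π₀ x := by
    refine (hi.add hπ2).mono' (measurable_id.mul hπm).aestronglyMeasurable
      (Filter.Eventually.of_forall fun x => ?_)
    simp only [Pi.add_apply, norm_mul, Real.norm_eq_abs]
    rw [abs_of_nonneg (hπnn x)]
    have : |x| ≤ 1 + x ^ 2 := by nlinarith [sq_abs x, sq_nonneg (|x| - 1), abs_nonneg x]
    nlinarith [mul_le_mul_of_nonneg_right this (hπnn x)]
  refine ⟨fun φ hφ a1 a2 => part1 α₁ α₂ h1 h12 hπnn hi hi1 φ hφ a1 a2, fun _ _ b1 b2 => ?_⟩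
  obtain ⟨c1, d1⟩ := mse_eq h1 hπnn hi hi1 hπ2 b1
  obtain ⟨c2, d2⟩ := mse_eq (h1.trans h12) hπnn hi hi1 hπ2 b2
  rw [d1, d2]
  have := part1 (k := k) α₁ α₂ h1 h12 hπnn hi hi1 (fun x => x ^ 2) (even_two.convexOn_pow) c1 c2
  linarith
end
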